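/- Suppose 2 < p < ∞, 0 < s < 1 with 1 − 2/p < s, let p' be the conjugate exponent of p, and let g be holomorphic on the unit disc D. Then the Volterra operator T_g maps the Besov space B^p into Q_s if and only if g ∈ Q_{s,log,1/p'}. -/

import Mathlib

open MeasureTheory Metric Complex Real Filter Set

noncomputable section

/-- `f` is holomorphic on the open unit disc. -/
def HolOn (f : ℂ → ℂ) : Prop := DifferentiableOn ℂ f (Metric.ball (0:ℂ) 1)

/-- The normalized Lebesgue area measure on `ℂ` (so the unit disc has total mass 1). -/
def dA : Measure ℂ := (ENNReal.ofReal π)⁻¹ • volume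

/-- Bounded holomorphic functions on the unit disc. -/
def Hinf : Set (ℂ → ℂ) :=
  {f | HolOn f ∧ ∃ C : ℝ, ∀ z ∈ Metric.ball (0:ℂ) 1, ‖f z‖ ≤ C}

/-- The Bloch space. -/
def Bloch : Set (ℂ → ℂ) :=
  {f | HolOn f ∧ ∃ C : ℝ, ∀ z ∈ Metric.ball (0:ℂ) 1,
      (1 - ‖z‖ ^ 2) * ‖deriv f z‖ ≤ C}

/-- The little Bloch space: `(1-|z|²)|f'(z)| → 0` as `|z| → 1⁻`. -/
def littleBloch : Set (ℂ → ℂ) :=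
  {f | HolOn f ∧ ∀ ε : ℝ, 0 < ε → ∃ r : ℝ, r < 1 ∧ ∀ z ∈ Metric.ball (0:ℂ) 1,
      r < ‖z‖ → (1 - ‖z‖ ^ 2) * ‖deriv f z‖ < ε}

/-- The `α`-logarithmic Bloch space. -/
def BlochLog (α : ℝ) : Set (ℂ → ℂ) :=
  {f | HolOn f ∧ ∃ C : ℝ, ∀ z ∈ Metric.ball (0:ℂ) 1,
      (1 - ‖z‖ ^ 2) * (Real.log (2 / (1 - ‖z‖ ^ 2))) ^ α *
        ‖deriv f z‖ ≤ C}

/-- The Besov space `B¹`: holomorphic `f` with `∫_D |f''| dA < ∞`. -/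
def Besov1 : Set (ℂ → ℂ) :=
  {f | HolOn f ∧ ∫⁻ z in Metric.ball (0:ℂ) 1,
      ENNReal.ofReal (‖deriv (deriv f) z‖) ∂dA < ⊤}

/-- The Besov space `Bᵖ` (`1 < p < ∞`): `∫_D (1-|z|)^(p-2) |f'(z)|^p dA(z) < ∞`. -/
def Besov (p : ℝ) : Set (ℂ → ℂ) :=
  {f | HolOn f ∧ ∫⁻ z in Metric.ball (0:ℂ) 1,
      ENNReal.ofReal ((1 - ‖z‖) ^ (p - 2) * ‖deriv f z‖ ^ p) ∂dA < ⊤}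

open scoped Classical in
/-- The Besov space `Bᵖ` for all `1 ≤ p < ∞` (with the special definition at `p = 1`). -/
def BesovFull (p : ℝ) : Set (ℂ → ℂ) := if p = 1 then Besov1 else Besov p

/-- The Möbius transformation `φ_a(z) = (a-z)/(1 - conj a · z)`. -/
def phi (a z : ℂ) : ℂ := (a - z) / (1 - (starRingEnd ℂ) a * z)

/-- The space `Q_s`. -/
def Qs (s : ℝ) : Set (ℂ → ℂ) :=
  {f | HolOn f ∧ ⨆ a ∈ Metric.ball (0:ℂ) 1, ∫⁻ z in Metric.ball (0:ℂ) 1,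
      ENNReal.ofReal (‖deriv f z‖ ^ 2 *
        (1 - ‖phi a z‖ ^ 2) ^ s) ∂dA < ⊤}

/-- The space `Q_{s,log,α}`. -/
def QsLog (s α : ℝ) : Set (ℂ → ℂ) :=
  {f | HolOn f ∧ ⨆ a ∈ Metric.ball (0:ℂ) 1,
      (ENNReal.ofReal ((Real.log (2 / (1 - ‖a‖))) ^ (2 * α)) *
        ∫⁻ z in Metric.ball (0:ℂ) 1,
          ENNReal.ofReal (‖deriv f z‖ ^ 2 *
            (1 - ‖phi a z‖ ^ 2) ^ s) ∂dA) < ⊤}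

/-- The Volterra operator `T_g(f)(z) = ∫_0^z g'(ξ) f(ξ) dξ` (along the segment from 0 to z). -/
def Tg (g f : ℂ → ℂ) : ℂ → ℂ :=
  fun z => z * ∫ t in (0:ℝ)..1, deriv g ((t : ℂ) * z) * f ((t : ℂ) * z)

/-- The companion operator `I_g(f)(z) = ∫_0^z g(ξ) f'(ξ) dξ` (along the segment from 0 to z). -/
def Ig (g f : ℂ → ℂ) : ℂ → ℂ :=
  fun z => z * ∫ t in (0:ℝ)..1, g ((t : ℂ) * z) * deriv f ((t : ℂ) * z)

/-- The multiplication operator `M_g(f) = g · f`. -/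
def Mg (g f : ℂ → ℂ) : ℂ → ℂ := fun z => g z * f z

/-- `T` maps `X` into `Y`. -/
def MapsInto (T : (ℂ → ℂ) → (ℂ → ℂ)) (X Y : Set (ℂ → ℂ)) : Prop :=
  ∀ f ∈ X, T f ∈ Y

/-- The Hardy space `H^q`. -/
def Hardy (q : ℝ) : Set (ℂ → ℂ) :=
  {f | HolOn f ∧ ∃ C : ℝ, ∀ r : ℝ, 0 < r → r < 1 →
      (1 / (2 * π)) * ∫ t in (0:ℝ)..(2 * π),
        ‖f ((r : ℂ) * Complex.exp ((t : ℂ) * Complex.I))‖ ^ q ≤ C}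

/-- An inner function: bounded holomorphic with radial boundary values of modulus 1 a.e. -/
def IsInner (g : ℂ → ℂ) : Prop :=
  g ∈ Hinf ∧ ∀ᵐ t : ℝ ∂(volume.restrict (Set.Ioc (0:ℝ) (2 * π))),
    Filter.Tendsto (fun r : ℝ => ‖g ((r : ℂ) * Complex.exp ((t : ℂ) * Complex.I))‖)
      (nhdsWithin 1 (Set.Iio 1)) (nhds 1)

/-- `X` has the f-property (division by inner functions). -/
def FProperty (X : Set (ℂ → ℂ)) : Prop :=
  ∀ h ∈ X, ∀ g : ℂ → ℂ, IsInner g →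
    (fun z => h z / g z) ∈ Hardy 1 → (fun z => h z / g z) ∈ X

/-- The space of multipliers `M(X,Y)`. -/
def Mult (X Y : Set (ℂ → ℂ)) : Set (ℂ → ℂ) :=
  {g | HolOn g ∧ ∀ f ∈ X, (fun z => g z * f z) ∈ Y}

end

/-- Sub-mean value property on circles. -/
lemma circ_submean (H : ℂ → ℂ) (c : ℂ) (R r q : ℝ) (hH : DifferentiableOn ℂ H (ball c R))
    (hr : 0 < r) (hrR : r < R) (hq : 1 ≤ q) :
    ENNReal.ofReal (2 * π) * ENNReal.ofReal (‖H c‖ ^ q) ≤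
      ∫⁻ θ in Ioo (-π) π, ENNReal.ofReal (‖H (circleMap c r θ)‖ ^ q) := by
  have hcl : closedBall c r ⊆ ball c R := closedBall_subset_ball hrR
  have hd : DiffContOnCl ℂ H (ball c |r|) := by
    rw [abs_of_pos hr]
    exact (hH.mono (by rw [closure_ball c hr.ne']; exact hcl)).diffContOnCl
  have hcont : Continuous fun θ => H (circleMap c r θ) := by
    rw [← continuousOn_univ]
    apply hH.continuousOn.comp (continuous_circleMap c r).continuousOn
    intro θ _
    exact hcl (circleMap_mem_closedBall c hr.le θ)
  have h1 := hd.circleAverage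
  have hπ := Real.pi_pos
  have h2 : ‖H c‖ ≤ ⨍ θ in Ioc (-π) π, ‖H (circleMap c r θ)‖ := by
    rw [← h1, circleAverage]
    have hper : Function.Periodic (fun θ => H (circleMap c r θ)) (2 * π) := by
      intro θ; simp only [periodic_circleMap c r θ]
    have := hper.intervalIntegral_add_eq 0 (-π)
    rw [zero_add, show -π + 2 * π = π by ring] at this
    rw [this, setAverage_eq, norm_smul, Real.norm_of_nonneg (by positivity)]
    have hv : volume.real (Ioc (-π) π) = 2 * π := by
      rw [Real.volume_real_Ioc_of_le (by linarith)]; ring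
    rw [hv, smul_eq_mul]
    gcongr
    rw [intervalIntegral.integral_of_le (by linarith)]
    exact norm_integral_le_integral_norm _
  have hint : ∀ f : ℝ → ℝ, Continuous f → Integrable f (volume.restrict (Ioc (-π) π)) := by
    intro f hf
    exact (hf.integrableOn_Icc).mono_set Ioc_subset_Icc_self
  have hcq : Continuous fun θ => ‖H (circleMap c r θ)‖ ^ q :=
    hcont.norm.rpow_const (fun _ => Or.inr (by linarith))
  have : NeZero (volume.restrict (Ioc (-π) π)) := ⟨by
    rw [Ne, Measure.restrict_eq_zero]
    simp [Real.volume_Ioc]; linarith⟩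
  have h3 := (convexOn_rpow hq).map_average_le (μ := volume.restrict (Ioc (-π) π))
    (f := fun θ => ‖H (circleMap c r θ)‖)
    (continuousOn_id.rpow_const (fun _ _ => Or.inr (by linarith))) isClosed_Ici
    (ae_of_all _ fun θ => norm_nonneg _) (hint _ hcont.norm) (hint _ hcq)
  have h4 : ‖H c‖ ^ q ≤ ⨍ θ in Ioc (-π) π, ‖H (circleMap c r θ)‖ ^ q :=
    (Real.rpow_le_rpow (norm_nonneg _) h2 (by linarith)).trans h3
  have hv : volume.real (Ioc (-π) π) = 2 * π := by
    rw [Real.volume_real_Ioc_of_le (by linarith)]; ring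
  rw [setAverage_eq, hv, smul_eq_mul] at h4
  rw [restrict_Ioo_eq_restrict_Ioc, ← ofReal_integral_eq_lintegral_ofReal (hint _ hcq)
    (ae_of_all _ fun θ => by positivity), ← ENNReal.ofReal_mul (by positivity)]
  apply ENNReal.ofReal_le_ofReal
  calc 2 * π * ‖H c‖ ^ q ≤ 2 * π * ((2 * π)⁻¹ * ∫ θ in Ioc (-π) π, ‖H (circleMap c r θ)‖ ^ q) := by
        gcongr
    _ = _ := by field_simp

/-- polar coordinates as an iterated lintegral, centered at `c` -/
lemma polar_lintegral (f : ℂ → ENNReal) (hf : Measurable f) (c : ℂ) :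
    ∫⁻ z, f z = ∫⁻ r in Ioi (0:ℝ), ∫⁻ θ in Ioo (-π) π,
      ENNReal.ofReal r * f (circleMap c r θ) := by
  have h1 : ∫⁻ z, f z = ∫⁻ z, f (c + z) := (lintegral_add_left_eq_self f c).symm
  rw [h1, ← Complex.lintegral_comp_polarCoord_symm]
  have : ∀ p : ℝ × ℝ, c + Complex.polarCoord.symm p = circleMap c p.1 p.2 := by
    intro p
    rw [Complex.polarCoord_symm_apply, circleMap, Complex.exp_mul_I]
    simp
  simp only [this, smul_eq_mul]
  rw [show polarCoord.target = Ioi (0:ℝ) ×ˢ Ioo (-π) π from rfl]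
  rw [Measure.volume_eq_prod, ← Measure.prod_restrict, lintegral_prod]
  apply Measurable.aemeasurable
  apply Measurable.mul (by fun_prop)
  apply hf.comp
  have : Continuous fun p : ℝ × ℝ => circleMap c p.1 p.2 := by
    unfold circleMap; fun_prop
  exact this.measurable

lemma submean (H : ℂ → ℂ) (hm : Measurable H) (c : ℂ) (R q : ℝ)
    (hH : DifferentiableOn ℂ H (ball c R)) (hR : 0 < R) (hq : 1 ≤ q) :
    ENNReal.ofReal (π * R ^ 2) * ENNReal.ofReal (‖H c‖ ^ q) ≤
      ∫⁻ u in ball c R, ENNReal.ofReal (‖H u‖ ^ q) := by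
  have hmq : Measurable fun u => ENNReal.ofReal (‖H u‖ ^ q) := by fun_prop
  rw [← lintegral_indicator measurableSet_ball,
    polar_lintegral _ (hmq.indicator measurableSet_ball) c]
  calc ENNReal.ofReal (π * R ^ 2) * ENNReal.ofReal (‖H c‖ ^ q)
      = ∫⁻ r in Ioo 0 R, ENNReal.ofReal r * (ENNReal.ofReal (2 * π) *
          ENNReal.ofReal (‖H c‖ ^ q)) := by
        rw [lintegral_mul_const _ (by fun_prop), restrict_Ioo_eq_restrict_Ioc,
          ← ofReal_integral_eq_lintegral_ofReal, ← intervalIntegral.integral_of_le hR.le,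
          integral_id, ← mul_assoc]
        · congr 1
          rw [← ENNReal.ofReal_mul' (by positivity)]
          congr 1; ring
        · exact (continuous_id.integrableOn_Icc).mono_set Ioc_subset_Icc_self
        · filter_upwards [ae_restrict_mem measurableSet_Ioc] with r hr using hr.1.le
    _ ≤ ∫⁻ r in Ioo 0 R, ∫⁻ θ in Ioo (-π) π, ENNReal.ofReal r *
          ((ball c R).indicator (fun u => ENNReal.ofReal (‖H u‖ ^ q)) (circleMap c r θ)) := by
        apply setLIntegral_mono' measurableSet_Ioo
        intro r hr
        rw [lintegral_const_mul' _ _ ENNReal.ofReal_ne_top]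
        gcongr
        refine (circ_submean H c R r q hH hr.1 hr.2 hq).trans_eq ?_
        congr 1; ext θ
        rw [indicator_of_mem]
        exact closedBall_subset_ball hr.2 (circleMap_mem_closedBall c hr.1.le θ)
    _ ≤ _ := lintegral_mono_set Ioo_subset_Ioi_self

lemma radial_measure (ρ c d : ℝ) (hρ : 0 ≤ ρ) (hd : 0 ≤ d) :
    ENNReal.ofReal ρ * volume {t : ℝ | |t * ρ - c| < d} ≤ ENNReal.ofReal (2 * d) := by
  rcases hρ.eq_or_lt with h | h
  · simp [← h]
  · have : {t : ℝ | |t * ρ - c| < d} = ball (c / ρ) (d / ρ) := by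
      ext t
      have e : |t * ρ - c| = |t - c / ρ| * ρ := by
        calc |t * ρ - c| = |(t - c / ρ) * ρ| := by congr 1; field_simp
          _ = _ := by rw [abs_mul, abs_of_pos h]
      rw [mem_ofPred_eq, mem_ball, Real.dist_eq, lt_div_iff₀ h, e]
    rw [this, Real.volume_ball, ← ENNReal.ofReal_mul hρ]
    apply le_of_eq; congr 1; field_simp

/-- The averaging lemma along radii. -/
lemma radial_avg (F : ℂ → ℂ) (hF : HolOn F) (q : ℝ) (hq : 1 ≤ q) (z : ℂ) (hz : ‖z‖ < 1)
    (V : ℝ → ENNReal) (Φ : ℂ → ENNReal) (hΦ : Measurable Φ)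
    (hV : ∀ t ∈ Ioo (0:ℝ) 1, ∀ u ∈ ball ((t:ℂ) * z) ((1 - t * ‖z‖) / 2), V t ≤ Φ u) :
    ∫⁻ t in Ioo (0:ℝ) 1, ENNReal.ofReal (‖z‖ * ‖deriv F ((t:ℂ) * z)‖ ^ q) * V t ≤
      6 * ∫⁻ u in ball (0:ℂ) 1, ENNReal.ofReal (‖deriv F u‖ ^ q / (1 - ‖u‖)) * Φ u := by
  have hHd : DifferentiableOn ℂ (deriv F) (ball 0 1) := hF.deriv isOpen_ball
  have hm : Measurable (deriv F) := measurable_deriv F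
  set ρ := ‖z‖ with hρ
  have hρ0 : 0 ≤ ρ := norm_nonneg z
  -- the kernel
  let K : ℝ → ℂ → ENNReal := fun t u => ({x : ℝ × ℂ | |x.1 * ρ - ‖x.2‖| < 1 - ‖x.2‖}).indicator
      (fun _ => ENNReal.ofReal ρ) (t, u)
  have hset : MeasurableSet {x : ℝ × ℂ | |x.1 * ρ - ‖x.2‖| < 1 - ‖x.2‖} := by
    apply measurableSet_lt <;> fun_prop
  have hKm : Measurable (Function.uncurry K) := measurable_const.indicator hset
  let G : ℂ → ENNReal := fun u => ENNReal.ofReal (3 / (1 - ‖u‖) ^ 2 * ‖deriv F u‖ ^ q) * Φ u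
  have hGm : Measurable G := by fun_prop
  have step1 : ∀ t ∈ Ioo (0:ℝ) 1, ENNReal.ofReal (ρ * ‖deriv F ((t:ℂ) * z)‖ ^ q) * V t ≤
      ∫⁻ u in ball (0:ℂ) 1, K t u * G u := by
    intro t ht
    set δ := 1 - t * ρ with hδ
    have htρ : t * ρ < 1 := by nlinarith [ht.1, ht.2]
    have hδ0 : 0 < δ := by linarith
    have hnt : ‖(t:ℂ) * z‖ = t * ρ := by
      rw [norm_mul, Complex.norm_real, Real.norm_of_nonneg ht.1.le]
    have hu : ∀ u ∈ ball ((t:ℂ) * z) (δ / 2), |t * ρ - ‖u‖| < δ / 2 := by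
      intro u hu
      rw [mem_ball, dist_eq_norm] at hu
      rw [← hnt, abs_sub_comm]
      exact (abs_norm_sub_norm_le _ _).trans_lt hu
    have hsub : ball ((t:ℂ) * z) (δ / 2) ⊆ ball 0 1 := by
      intro u hu'
      have := hu u hu'
      rw [abs_lt] at this
      rw [mem_ball_zero_iff]; linarith
    have hsm := submean (deriv F) hm ((t:ℂ) * z) (δ / 2) q (hHd.mono hsub) (by positivity) hq
    have hc : ENNReal.ofReal (ρ * ‖deriv F ((t:ℂ) * z)‖ ^ q) =
        ENNReal.ofReal (ρ * (π * (δ / 2) ^ 2)⁻¹) *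
        (ENNReal.ofReal (π * (δ / 2) ^ 2) * ENNReal.ofReal (‖deriv F ((t:ℂ) * z)‖ ^ q)) := by
      rw [← ENNReal.ofReal_mul (by positivity), ← ENNReal.ofReal_mul (by positivity)]
      congr 1
      have := Real.pi_pos
      field_simp
    calc _ ≤ ENNReal.ofReal (ρ * (π * (δ / 2) ^ 2)⁻¹) *
          (∫⁻ u in ball ((t:ℂ) * z) (δ / 2), ENNReal.ofReal (‖deriv F u‖ ^ q)) * V t := by
          rw [hc]; gcongr
      _ = ∫⁻ u in ball ((t:ℂ) * z) (δ / 2), ENNReal.ofReal (ρ * (π * (δ / 2) ^ 2)⁻¹) *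
          ENNReal.ofReal (‖deriv F u‖ ^ q) * V t := by
          rw [← lintegral_const_mul _ (by fun_prop), lintegral_mul_const _ (by fun_prop)]
      _ ≤ ∫⁻ u in ball ((t:ℂ) * z) (δ / 2), K t u * G u := by
          apply setLIntegral_mono' measurableSet_ball
          intro u hu'
          have h1 := hu u hu'
          rw [abs_lt] at h1
          have hmem : (t, u) ∈ {x : ℝ × ℂ | |x.1 * ρ - ‖x.2‖| < 1 - ‖x.2‖} := by
            rw [mem_ofPred_eq]; dsimp only
            rw [abs_lt]; constructor <;> linarith
          have hpos : 0 < 1 - ‖u‖ := by linarith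
          simp only [K, G, indicator_of_mem hmem]
          rw [← mul_assoc, ← ENNReal.ofReal_mul (by positivity),
            ← ENNReal.ofReal_mul (by positivity)]
          gcongr ENNReal.ofReal ?_ * ?_
          · rw [mul_assoc]
            gcongr ρ * (?_ * _)
            rw [inv_eq_one_div, div_le_div_iff₀ (by positivity) (by positivity)]
            have : (1 - ‖u‖) ^ 2 ≤ (3 / 2 * δ) ^ 2 := by
              apply pow_le_pow_left₀ hpos.le; linarith
            nlinarith [Real.pi_gt_three, sq_nonneg δ]
          · exact hV t ht u hu'
      _ ≤ _ := lintegral_mono_set hsub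
  calc _ ≤ ∫⁻ t in Ioo (0:ℝ) 1, ∫⁻ u in ball (0:ℂ) 1, K t u * G u :=
        setLIntegral_mono' measurableSet_Ioo step1
    _ = ∫⁻ u in ball (0:ℂ) 1, ∫⁻ t in Ioo (0:ℝ) 1, K t u * G u := by
        apply lintegral_lintegral_swap
        apply Measurable.aemeasurable
        exact hKm.mul (hGm.comp measurable_snd)
    _ ≤ ∫⁻ u in ball (0:ℂ) 1, 6 * (ENNReal.ofReal (‖deriv F u‖ ^ q / (1 - ‖u‖)) * Φ u) := by
        apply setLIntegral_mono' measurableSet_ball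
        intro u hu
        rw [mem_ball_zero_iff] at hu
        have hpos : 0 < 1 - ‖u‖ := by linarith
        have hKu : Measurable fun t => K t u := hKm.comp (measurable_id.prodMk measurable_const)
        rw [lintegral_mul_const _ hKu]
        have h2 : ∫⁻ t in Ioo (0:ℝ) 1, K t u ≤ ENNReal.ofReal (2 * (1 - ‖u‖)) := by
          calc _ ≤ ∫⁻ t, K t u := setLIntegral_le_lintegral _ _
            _ = ∫⁻ t, ({t : ℝ | |t * ρ - ‖u‖| < 1 - ‖u‖}).indicator
                (fun _ => ENNReal.ofReal ρ) t := by
                congr 1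
            _ = ENNReal.ofReal ρ * volume {t : ℝ | |t * ρ - ‖u‖| < 1 - ‖u‖} := by
                rw [lintegral_indicator_const]
                apply measurableSet_lt <;> fun_prop
            _ ≤ _ := radial_measure _ _ _ hρ0 hpos.le
        calc _ ≤ ENNReal.ofReal (2 * (1 - ‖u‖)) * G u := by gcongr
          _ = _ := by
            simp only [G]
            rw [← mul_assoc, ← mul_assoc, ← ENNReal.ofReal_mul (by positivity),
              show (6 : ENNReal) = ENNReal.ofReal 6 by simp,
              ← ENNReal.ofReal_mul (by positivity)]
            congr 2
            field_simp
            ring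
    _ = _ := by
        rw [lintegral_const_mul]
        fun_prop

lemma radial_mem {z : ℂ} (hz : ‖z‖ < 1) {t : ℝ} (ht : t ∈ Icc (0:ℝ) 1) :
    (t:ℂ) * z ∈ ball (0:ℂ) 1 := by
  rw [mem_ball_zero_iff, norm_mul, Complex.norm_real, Real.norm_of_nonneg ht.1]
  nlinarith [ht.1, ht.2, norm_nonneg z]

lemma radial_cont (H : ℂ → ℂ) (hH : HolOn H) (z : ℂ) (hz : ‖z‖ < 1) :
    ContinuousOn (fun t : ℝ => H ((t:ℂ) * z)) (Icc 0 1) := by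
  apply ContinuousOn.comp hH.continuousOn (by fun_prop)
  intro t ht
  exact radial_mem hz ht

lemma ftc_radial (F H : ℂ → ℂ) (hF : ∀ z ∈ ball (0:ℂ) 1, HasDerivAt F (H z) z) (hH : HolOn H)
    (z : ℂ) (hz : ‖z‖ < 1) :
    F z - F 0 = z * ∫ t in (0:ℝ)..1, H ((t:ℂ) * z) := by
  rw [← intervalIntegral.integral_const_mul]
  have hc := radial_cont H hH z hz
  have := intervalIntegral.integral_eq_sub_of_hasDerivAt (a := 0) (b := 1)
    (f := fun t : ℝ => F ((t:ℂ) * z)) (f' := fun t : ℝ => z * H ((t:ℂ) * z)) ?_ ?_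
  · rw [this]; simp
  · intro t ht
    rw [uIcc_of_le zero_le_one] at ht
    have h1 := hF _ (radial_mem hz ht)
    have h2 : HasDerivAt (fun t : ℝ => (t:ℂ) * z) z t := by
      simpa using (Complex.ofRealCLM.hasDerivAt (x := t)).mul_const z
    have := h1.scomp t h2
    exact this
  · apply ContinuousOn.intervalIntegrable
    rw [uIcc_of_le zero_le_one]
    exact continuousOn_const.mul hc

lemma HolOn.hasDerivAt {F : ℂ → ℂ} (hF : HolOn F) {z : ℂ} (hz : z ∈ ball (0:ℂ) 1) :
    HasDerivAt F (deriv F z) z :=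
  (hF.differentiableAt (isOpen_ball.mem_nhds hz)).hasDerivAt

lemma HolOn.deriv {F : ℂ → ℂ} (hF : HolOn F) : HolOn (deriv F) :=
  DifferentiableOn.deriv hF isOpen_ball

lemma radial_bound (F : ℂ → ℂ) (hF : HolOn F) (z : ℂ) (hz : ‖z‖ < 1) :
    ENNReal.ofReal ‖F z - F 0‖ ≤
      ENNReal.ofReal ‖z‖ * ∫⁻ t in Ioo (0:ℝ) 1, ENNReal.ofReal ‖deriv F ((t:ℂ) * z)‖ := by
  rw [ftc_radial F (deriv F) (fun z hz => hF.hasDerivAt hz) hF.deriv z hz, norm_mul,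
    ENNReal.ofReal_mul (norm_nonneg _)]
  gcongr
  rw [intervalIntegral.integral_of_le zero_le_one, restrict_Ioo_eq_restrict_Ioc]
  simp only [ofReal_norm]
  exact enorm_integral_le_lintegral_enorm _

lemma radial_holder (F : ℂ → ℂ) (hF : HolOn F) (q : ℝ) (hq : 1 < q) (z : ℂ) (hz : ‖z‖ < 1)
    (v : ℝ → ℝ) (hvm : Measurable v) (hv : ∀ t ∈ Ioo (0:ℝ) 1, 0 < v t) :
    ENNReal.ofReal (‖F z - F 0‖ ^ q) ≤
      (∫⁻ t in Ioo (0:ℝ) 1, ENNReal.ofReal (‖z‖ * ‖deriv F ((t:ℂ) * z)‖ ^ q) *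
        ENNReal.ofReal (v t ^ (q - 1))) *
      (∫⁻ t in Ioo (0:ℝ) 1, ENNReal.ofReal (‖z‖ / v t)) ^ (q - 1) := by
  have hm : Measurable (deriv F) := measurable_deriv F
  have hq0 : 0 < q := by linarith
  have hq1 : 0 < q - 1 := by linarith
  set μ : Measure ℝ := ENNReal.ofReal ‖z‖ • volume.restrict (Ioo (0:ℝ) 1) with hμ
  have hconj : q.HolderConjugate (q / (q - 1)) := Real.HolderConjugate.conjExponent hq
  have hae : ∀ᵐ t ∂μ, t ∈ Ioo (0:ℝ) 1 :=
    (Measure.smul_absolutelyContinuous).ae_le (ae_restrict_mem measurableSet_Ioo)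
  have h1 := ENNReal.lintegral_mul_le_Lp_mul_Lq μ hconj
    (f := fun t => ENNReal.ofReal (‖deriv F ((t:ℂ) * z)‖ * v t ^ ((q - 1) / q)))
    (g := fun t => ENNReal.ofReal (v t ^ (-((q - 1) / q))))
    (by fun_prop) (by fun_prop)
  have h2 : ENNReal.ofReal ‖F z - F 0‖ ≤ ∫⁻ t, ((fun t : ℝ =>
      ENNReal.ofReal (‖deriv F ((t:ℂ) * z)‖ * v t ^ ((q - 1) / q))) * fun t : ℝ =>
      ENNReal.ofReal (v t ^ (-((q - 1) / q)))) t ∂μ := by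
    refine (radial_bound F hF z hz).trans_eq ?_
    rw [← smul_eq_mul, ← lintegral_smul_measure]
    apply lintegral_congr_ae
    filter_upwards [hae] with t ht
    have := hv t ht
    simp only [Pi.mul_apply]
    rw [← ENNReal.ofReal_mul (by positivity), mul_assoc, ← Real.rpow_add this]
    simp
  have h3 := ENNReal.rpow_le_rpow (h2.trans h1) hq0.le
  rw [ENNReal.ofReal_rpow_of_nonneg (norm_nonneg _) hq0.le, ENNReal.mul_rpow_of_nonneg _ _ hq0.le,
    ← ENNReal.rpow_mul, ← ENNReal.rpow_mul] at h3
  refine h3.trans_eq ?_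
  have e1 : 1 / q * q = 1 := by field_simp
  have e2 : 1 / (q / (q - 1)) * q = q - 1 := by field_simp
  rw [e1, e2, ENNReal.rpow_one]
  congr 1
  · rw [hμ, lintegral_smul_measure, smul_eq_mul, ← lintegral_const_mul _ (by fun_prop)]
    apply setLIntegral_congr_fun measurableSet_Ioo
    intro t ht
    have := hv t ht
    dsimp only
    rw [ENNReal.ofReal_rpow_of_nonneg (by positivity) hq0.le, Real.mul_rpow (by positivity)
      (by positivity), ← Real.rpow_mul this.le, ← ENNReal.ofReal_mul (by positivity),
      ← ENNReal.ofReal_mul (by positivity), mul_assoc]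
    congr 4
    field_simp
  · congr 1
    rw [hμ, lintegral_smul_measure, smul_eq_mul, ← lintegral_const_mul _ (by fun_prop)]
    apply setLIntegral_congr_fun measurableSet_Ioo
    intro t ht
    have := hv t ht
    dsimp only
    rw [ENNReal.ofReal_rpow_of_nonneg (by positivity) (by positivity), ← Real.rpow_mul this.le,
      ← ENNReal.ofReal_mul (by positivity)]
    have e3 : -((q - 1) / q) * (q / (q - 1)) = -1 := by field_simp
    rw [e3, Real.rpow_neg_one, ← div_eq_mul_inv]

lemma lintegral_ftc (P P' : ℝ → ℝ) (hP : ∀ t ∈ Icc (0:ℝ) 1, HasDerivAt P (P' t) t)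
    (hc : ContinuousOn P' (Icc 0 1)) (h0 : ∀ t ∈ Icc (0:ℝ) 1, 0 ≤ P' t) :
    ∫⁻ t in Ioo (0:ℝ) 1, ENNReal.ofReal (P' t) = ENNReal.ofReal (P 1 - P 0) := by
  have hint : IntervalIntegrable P' volume 0 1 := by
    apply ContinuousOn.intervalIntegrable
    rwa [uIcc_of_le zero_le_one]
  rw [← intervalIntegral.integral_eq_sub_of_hasDerivAt (f' := P') (by
    rwa [uIcc_of_le zero_le_one]) hint, intervalIntegral.integral_of_le zero_le_one,
    restrict_Ioo_eq_restrict_Ioc, ofReal_integral_eq_lintegral_ofReal hint.1]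
  filter_upwards [ae_restrict_mem measurableSet_Ioc] with t ht
  exact h0 t ⟨ht.1.le, ht.2⟩

/-- geometric facts on the averaging discs -/
lemma disc_facts {z u : ℂ} {t : ℝ} (hz : ‖z‖ < 1) (ht : t ∈ Ioo (0:ℝ) 1)
    (hu : u ∈ ball ((t:ℂ) * z) ((1 - t * ‖z‖) / 2)) :
    0 < 1 - t * ‖z‖ ∧ 1 - t * ‖z‖ ≤ 2 * (1 - ‖u‖) ∧ 2 * (1 - ‖u‖) ≤ 3 * (1 - t * ‖z‖) ∧
      ‖1 - (starRingEnd ℂ) u * z‖ ≤ 5 * (1 - ‖u‖) := by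
  have hρ := norm_nonneg z
  have h1 : t * ‖z‖ < 1 := by nlinarith [ht.1, ht.2]
  have hnt : ‖(t:ℂ) * z‖ = t * ‖z‖ := by
    rw [norm_mul, Complex.norm_real, Real.norm_of_nonneg ht.1.le]
  rw [mem_ball, dist_eq_norm] at hu
  have h2 := (abs_norm_sub_norm_le u ((t:ℂ) * z)).trans_lt hu
  rw [hnt, abs_lt] at h2
  refine ⟨by linarith, by linarith, by linarith, ?_⟩
  have e : 1 - (starRingEnd ℂ) u * z =
      ((1 - t * ‖z‖ ^ 2 : ℝ) : ℂ) - (starRingEnd ℂ) (u - t * z) * z := by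
    have : (starRingEnd ℂ) z * z = ((‖z‖ ^ 2 : ℝ) : ℂ) := by
      rw [← Complex.normSq_eq_norm_sq, ← Complex.normSq_eq_conj_mul_self]
    rw [map_sub, map_mul, Complex.conj_ofReal, sub_mul, mul_assoc, this]
    push_cast; ring
  have h3 : ‖((1 - t * ‖z‖ ^ 2 : ℝ) : ℂ)‖ ≤ 2 * (1 - t * ‖z‖) := by
    rw [Complex.norm_real, Real.norm_of_nonneg (by nlinarith [ht.1, ht.2])]
    nlinarith [ht.1, ht.2, mul_nonneg ht.1.le hρ]
  have h4 : ‖(starRingEnd ℂ) (u - t * z) * z‖ ≤ (1 - t * ‖z‖) / 2 := by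
    rw [norm_mul, RCLike.norm_conj]
    nlinarith [norm_nonneg (u - t * z)]
  rw [e]
  refine (norm_sub_le _ _).trans ?_
  linarith

/-- Besov seminorm -/
noncomputable def NB (p : ℝ) (h : ℂ → ℂ) : ENNReal :=
  ∫⁻ z in ball (0:ℂ) 1, ENNReal.ofReal ((1 - ‖z‖) ^ (p - 2) * ‖deriv h z‖ ^ p)

lemma growth (p : ℝ) (hp : 2 < p) (h : ℂ → ℂ) (hh : HolOn h) (z : ℂ) (hz : ‖z‖ < 1) :
    ENNReal.ofReal (‖h z - h 0‖ ^ p) ≤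
      6 * (ENNReal.ofReal (2 ^ (p - 1)) * NB p h) *
        ENNReal.ofReal (Real.log (2 / (1 - ‖z‖)) ^ (p - 1)) := by
  have hρ := norm_nonneg z
  have hv : ∀ t ∈ Icc (0:ℝ) 1, 0 < 1 - t * ‖z‖ := by
    intro t ht; nlinarith [ht.1, ht.2]
  refine (radial_holder h hh p (by linarith) z hz (fun t => 1 - t * ‖z‖) (by fun_prop)
    (fun t ht => hv t (Ioo_subset_Icc_self ht))).trans ?_
  gcongr
  · refine (radial_avg h hh p (by linarith) z hz _
      (fun u => ENNReal.ofReal ((2 * (1 - ‖u‖)) ^ (p - 1))) (by fun_prop) ?_).trans ?_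
    · intro t ht u hu
      obtain ⟨h1, h2, -, -⟩ := disc_facts hz ht hu
      apply ENNReal.ofReal_le_ofReal
      exact Real.rpow_le_rpow h1.le h2 (by linarith)
    · gcongr
      rw [NB, ← lintegral_const_mul' _ _ ENNReal.ofReal_ne_top]
      apply setLIntegral_mono' measurableSet_ball
      intro u hu
      rw [mem_ball_zero_iff] at hu
      have h1 : 0 < 1 - ‖u‖ := by linarith
      rw [← ENNReal.ofReal_mul (by positivity), ← ENNReal.ofReal_mul (by positivity)]
      apply le_of_eq; congr 1
      rw [Real.mul_rpow (by norm_num) h1.le, show p - 1 = (p - 2) + 1 by ring,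
        Real.rpow_add_one h1.ne']
      field_simp
  · rw [lintegral_ftc (fun t => - Real.log (1 - t * ‖z‖)) _ ?_ ?_ ?_]
    · rw [ENNReal.ofReal_rpow_of_nonneg _ (by linarith)]
      · apply ENNReal.ofReal_le_ofReal
        apply Real.rpow_le_rpow _ _ (by linarith)
        · simp only [one_mul, zero_mul, sub_zero, Real.log_one, neg_zero]
          rw [← Real.log_inv]
          apply Real.log_nonneg
          apply (one_le_inv₀ (by linarith)).2; linarith
        · simp only [one_mul, zero_mul, sub_zero, Real.log_one, neg_zero]
          rw [← Real.log_inv]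
          have := hv 1 (by simp)
          rw [one_mul] at this
          apply Real.log_le_log (by positivity)
          rw [inv_eq_one_div]
          gcongr
          norm_num
      · simp only [one_mul, zero_mul, sub_zero, Real.log_one, neg_zero]
        rw [← Real.log_inv]
        apply Real.log_nonneg
        apply (one_le_inv₀ (by linarith)).2; linarith
    · intro t ht
      have h1 : HasDerivAt (fun t : ℝ => 1 - t * ‖z‖) (-‖z‖) t := by
        simpa using ((hasDerivAt_id t).mul_const ‖z‖).const_sub 1
      have := (h1.log (hv t ht).ne').neg
      rwa [neg_div, neg_neg] at this
    · apply ContinuousOn.div (by fun_prop) (by fun_prop)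
      intro t ht; exact (hv t ht).ne'
    · intro t ht
      have := hv t ht
      positivity

/-- The Carleson-type pointwise embedding. -/
lemma embedding (κ s : ℝ) (hκ : 1 < κ) (hs : 0 < s) : ∃ C : ENNReal, C ≠ ⊤ ∧
    ∀ F : ℂ → ℂ, HolOn F → ∀ z : ℂ, ‖z‖ < 1 →
    ENNReal.ofReal (‖F z - F 0‖ ^ 2) ≤ C * ∫⁻ u in ball (0:ℂ) 1,
      ENNReal.ofReal (‖deriv F u‖ ^ 2 * (Real.log (2 / (1 - ‖u‖)) ^ κ * (1 - ‖u‖) ^ (2 * s) /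
        ‖1 - (starRingEnd ℂ) u * z‖ ^ (2 * s))) := by
  set c : ℝ := 2 * 2 ^ κ * 5 ^ (2 * s) with hc
  have hc0 : 0 < c := by positivity
  refine ⟨6 * ENNReal.ofReal c * ENNReal.ofReal (Real.log 2 ^ (1 - κ) / (κ - 1)), ?_, ?_⟩
  · exact ENNReal.mul_ne_top (ENNReal.mul_ne_top (by norm_num) ENNReal.ofReal_ne_top)
      ENNReal.ofReal_ne_top
  intro F hF z hz
  have hρ := norm_nonneg z
  have hv : ∀ t ∈ Icc (0:ℝ) 1, 0 < 1 - t * ‖z‖ := by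
    intro t ht; nlinarith [ht.1, ht.2]
  have hv1 : ∀ t ∈ Icc (0:ℝ) 1, 1 - t * ‖z‖ ≤ 1 := by
    intro t ht; nlinarith [ht.1, ht.2]
  have hlog : ∀ x : ℝ, 0 < x → x ≤ 1 → 0 < Real.log (2 / x) := by
    intro x h0 h1
    apply Real.log_pos
    rw [lt_div_iff₀ h0]; linarith
  have hl2 : 0 < Real.log 2 := Real.log_pos (by norm_num)
  have h1 := radial_holder F hF 2 (by norm_num) z hz
    (fun t => (1 - t * ‖z‖) * Real.log (2 / (1 - t * ‖z‖)) ^ κ) (by fun_prop)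
    (fun t ht => by
      have := hv t (Ioo_subset_Icc_self ht)
      have := hlog _ this (hv1 t (Ioo_subset_Icc_self ht))
      positivity)
  have e21 : (2:ℝ) - 1 = 1 := by norm_num
  simp only [Real.rpow_two, e21, Real.rpow_one, ENNReal.rpow_one] at h1
  refine h1.trans ?_
  rw [mul_right_comm]
  gcongr
  · have h2 := radial_avg F hF 2 (by norm_num) z hz (fun t => ENNReal.ofReal ((1 - t * ‖z‖) *
      Real.log (2 / (1 - t * ‖z‖)) ^ κ))
      (fun u => ENNReal.ofReal (c * ((1 - ‖u‖) * (Real.log (2 / (1 - ‖u‖)) ^ κ *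
        (1 - ‖u‖) ^ (2 * s) / ‖1 - (starRingEnd ℂ) u * z‖ ^ (2 * s))))) (by fun_prop) ?_
    · simp only [Real.rpow_two] at h2
      refine h2.trans ?_
      rw [mul_assoc]
      gcongr
      rw [← lintegral_const_mul' _ _ ENNReal.ofReal_ne_top]
      apply setLIntegral_mono' measurableSet_ball
      intro u hu
      rw [mem_ball_zero_iff] at hu
      have h1 : 0 < 1 - ‖u‖ := by linarith
      have h3 := hlog _ h1 (by linarith [norm_nonneg u])
      rw [← ENNReal.ofReal_mul (by positivity), ← ENNReal.ofReal_mul (by positivity)]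
      apply le_of_eq; congr 1
      field_simp
    · intro t ht u hu
      have hδ1 := hv1 t (Ioo_subset_Icc_self ht)
      obtain ⟨h1, h2, h3, h4⟩ := disc_facts hz ht hu
      set δ := 1 - t * ‖z‖ with hδ
      have hu0 : 0 < 1 - ‖u‖ := by linarith
      have hu1 : 1 - ‖u‖ ≤ 1 := by linarith [norm_nonneg u]
      have h5 := hlog _ hu0 hu1
      have h6 := hlog _ h1 hδ1
      have h7 : Real.log (2 / δ) ≤ 2 * Real.log (2 / (1 - ‖u‖)) := by
        have : 2 * Real.log (2 / (1 - ‖u‖)) = Real.log ((2 / (1 - ‖u‖)) ^ 2) := by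
          rw [Real.log_pow]; norm_num
        rw [this]
        apply Real.log_le_log (by positivity)
        rw [div_pow, div_le_div_iff₀ h1 (by positivity)]
        nlinarith
      have hne : 0 < ‖1 - (starRingEnd ℂ) u * z‖ := by
        have : ‖(starRingEnd ℂ) u * z‖ < 1 := by
          rw [norm_mul, RCLike.norm_conj]; nlinarith [norm_nonneg u]
        have h := norm_sub_norm_le (1:ℂ) ((starRingEnd ℂ) u * z)
        rw [norm_one] at h; linarith
      apply ENNReal.ofReal_le_ofReal
      have h8 : 1 ≤ 5 ^ (2 * s) * ((1 - ‖u‖) ^ (2 * s) / ‖1 - (starRingEnd ℂ) u * z‖ ^ (2 * s)) := by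
        rw [mul_div_assoc', ← Real.mul_rpow (by norm_num) hu0.le, le_div_iff₀ (by positivity), one_mul]
        exact Real.rpow_le_rpow hne.le h4 (by positivity)
      have h9 : Real.log (2 / δ) ^ κ ≤ 2 ^ κ * Real.log (2 / (1 - ‖u‖)) ^ κ := by
        rw [← Real.mul_rpow (by norm_num) h5.le]
        exact Real.rpow_le_rpow h6.le h7 (by linarith)
      calc δ * Real.log (2 / δ) ^ κ ≤ (2 * (1 - ‖u‖)) * (2 ^ κ * Real.log (2 / (1 - ‖u‖)) ^ κ) := by
            gcongr
        _ ≤ (2 * (1 - ‖u‖)) * (2 ^ κ * Real.log (2 / (1 - ‖u‖)) ^ κ) *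
            (5 ^ (2 * s) * ((1 - ‖u‖) ^ (2 * s) / ‖1 - (starRingEnd ℂ) u * z‖ ^ (2 * s))) :=
            le_mul_of_one_le_right (by positivity) h8
        _ = _ := by rw [hc]; ring
  · rw [lintegral_ftc (fun t => (1 - κ)⁻¹ * Real.log (2 / (1 - t * ‖z‖)) ^ (1 - κ)) _ ?_ ?_ ?_]
    · apply ENNReal.ofReal_le_ofReal
      have h2 := hlog _ (hv 1 (by simp)) (hv1 1 (by simp))
      have h3 : (1 - κ)⁻¹ < 0 := inv_lt_zero.2 (by linarith)
      have h4 : 0 < Real.log (2 / (1 - 1 * ‖z‖)) ^ (1 - κ) := by positivity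
      simp only [zero_mul, sub_zero, div_one]
      have : Real.log 2 ^ (1 - κ) / (κ - 1) = - ((1 - κ)⁻¹ * Real.log 2 ^ (1 - κ)) := by
        have a1 : κ - 1 ≠ 0 := by linarith
        have a2 : 1 - κ ≠ 0 := by linarith
        rw [show κ - 1 = - (1 - κ) by ring, div_neg, div_eq_inv_mul]
      rw [this]
      nlinarith
    · intro t ht
      have hd := hv t ht
      have hl := hlog _ hd (hv1 t ht)
      have h1 : HasDerivAt (fun t : ℝ => 1 - t * ‖z‖) (-‖z‖) t := by
        simpa using ((hasDerivAt_id t).mul_const ‖z‖).const_sub 1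
      have h2 : HasDerivAt (fun t : ℝ => Real.log (2 / (1 - t * ‖z‖))) (‖z‖ / (1 - t * ‖z‖)) t := by
        have h0 : HasDerivAt (fun t : ℝ => 2 / (1 - t * ‖z‖))
            ((0 * (1 - t * ‖z‖) - 2 * -‖z‖) / (1 - t * ‖z‖) ^ 2) t :=
          (hasDerivAt_const t (2:ℝ)).div h1 hd.ne'
        refine (h0.log (by positivity)).congr_deriv ?_
        field_simp
        ring
      have h3 := (h2.rpow_const (p := 1 - κ) (Or.inl hl.ne')).const_mul (1 - κ)⁻¹
      refine h3.congr_deriv ?_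
      have a2 : 1 - κ ≠ 0 := by linarith
      rw [show 1 - κ - 1 = -κ by ring, Real.rpow_neg hl.le]
      field_simp
    · apply ContinuousOn.div (by fun_prop)
      · apply ContinuousOn.mul (by fun_prop)
        apply ContinuousOn.rpow_const
        · apply ContinuousOn.log
          · apply ContinuousOn.div (by fun_prop) (by fun_prop)
            intro t ht; exact (hv t ht).ne'
          · intro t ht
            have := hv t ht
            positivity
        · intro t ht; right; linarith
      · intro t ht
        have h1 := hv t ht
        have h2 := hlog _ h1 (hv1 t ht)
        positivity
    · intro t ht
      have h1 := hv t ht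
      have h2 := hlog _ h1 (hv1 t ht)
      positivity

lemma den_lower {a z : ℂ} (ha : ‖a‖ < 1) (hz : ‖z‖ < 1) :
    1 - ‖z‖ ≤ ‖1 - (starRingEnd ℂ) a * z‖ ∧ 1 - ‖a‖ ≤ ‖1 - (starRingEnd ℂ) a * z‖ ∧
    0 < ‖1 - (starRingEnd ℂ) a * z‖ ∧ ‖1 - (starRingEnd ℂ) a * z‖ < 2 := by
  have h := norm_sub_norm_le (1:ℂ) ((starRingEnd ℂ) a * z)
  have h' := norm_sub_le (1:ℂ) ((starRingEnd ℂ) a * z)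
  rw [norm_one, norm_mul, RCLike.norm_conj] at h h'
  have h1 : ‖a‖ * ‖z‖ ≤ ‖z‖ := by nlinarith [norm_nonneg z]
  have h2 : ‖a‖ * ‖z‖ ≤ ‖a‖ := by nlinarith [norm_nonneg a]
  refine ⟨by linarith, by linarith, by linarith, by linarith⟩

lemma den_ne {a z : ℂ} (ha : ‖a‖ < 1) (hz : ‖z‖ < 1) : 1 - (starRingEnd ℂ) a * z ≠ 0 :=
  norm_pos_iff.1 (den_lower ha hz).2.2.1

lemma one_sub_phi {a z : ℂ} (ha : ‖a‖ < 1) (hz : ‖z‖ < 1) :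
    1 - ‖phi a z‖ ^ 2 = (1 - ‖a‖ ^ 2) * (1 - ‖z‖ ^ 2) / ‖1 - (starRingEnd ℂ) a * z‖ ^ 2 := by
  have h0 := (den_lower ha hz).2.2.1
  rw [phi, norm_div, div_pow, eq_div_iff (by positivity), sub_mul, div_mul_cancel₀ _ (by positivity),
    one_mul]
  simp only [← Complex.normSq_eq_norm_sq, Complex.normSq_apply]
  simp
  ring

lemma phi_lt {a z : ℂ} (ha : ‖a‖ < 1) (hz : ‖z‖ < 1) : ‖phi a z‖ < 1 := by
  have h := one_sub_phi ha hz
  have h0 := (den_lower ha hz).2.2.1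
  have h1 : 0 < 1 - ‖a‖ ^ 2 := by nlinarith [norm_nonneg a]
  have h2 : 0 < 1 - ‖z‖ ^ 2 := by nlinarith [norm_nonneg z]
  have : 0 < 1 - ‖phi a z‖ ^ 2 := by rw [h]; positivity
  nlinarith [norm_nonneg (phi a z)]

lemma one_sub_sq_ne {a : ℂ} (ha : ‖a‖ < 1) : 1 - (starRingEnd ℂ) a * a ≠ 0 := den_ne ha ha

lemma phi_phi {a z : ℂ} (ha : ‖a‖ < 1) (hz : ‖z‖ < 1) : phi a (phi a z) = z := by
  have h0 := den_ne ha hz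
  have h1 := one_sub_sq_ne ha
  have h2 : 1 - (starRingEnd ℂ) a * phi a z ≠ 0 := den_ne ha (phi_lt ha hz)
  rw [phi, div_eq_iff h2, phi]
  have key : (a - z) / (1 - (starRingEnd ℂ) a * z) * (1 - (starRingEnd ℂ) a * z) = a - z :=
    div_mul_cancel₀ _ h0
  linear_combination -key

lemma phi_hasDerivAt {a z : ℂ} (ha : ‖a‖ < 1) (hz : ‖z‖ < 1) :
    HasDerivAt (phi a) (-(1 - (starRingEnd ℂ) a * a) / (1 - (starRingEnd ℂ) a * z) ^ 2) z := by
  have h0 := den_ne ha hz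
  have h1 : HasDerivAt (fun z : ℂ => a - z) (-1) z := (hasDerivAt_id z).const_sub a
  have h2 : HasDerivAt (fun z : ℂ => 1 - (starRingEnd ℂ) a * z) (-((starRingEnd ℂ) a)) z := by
    simpa using ((hasDerivAt_id z).const_mul ((starRingEnd ℂ) a)).const_sub 1
  have h3 : HasDerivAt (phi a) _ z := h1.div h2 h0
  refine h3.congr_deriv ?_
  congr 1
  ring

lemma norm_phi_deriv {a z : ℂ} (ha : ‖a‖ < 1) :
    ‖-(1 - (starRingEnd ℂ) a * a) / (1 - (starRingEnd ℂ) a * z) ^ 2‖ =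
      (1 - ‖a‖ ^ 2) / ‖1 - (starRingEnd ℂ) a * z‖ ^ 2 := by
  rw [norm_div, norm_neg, norm_pow]
  congr 1
  have : (1 - (starRingEnd ℂ) a * a) = ((1 - ‖a‖ ^ 2 : ℝ) : ℂ) := by
    rw [← Complex.normSq_eq_norm_sq, ← Complex.normSq_eq_conj_mul_self]
    push_cast; ring
  rw [this, Complex.norm_real, Real.norm_of_nonneg]
  nlinarith [norm_nonneg a]

lemma phi_image {a : ℂ} (ha : ‖a‖ < 1) : phi a '' ball (0:ℂ) 1 = ball 0 1 := by
  ext z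
  constructor
  · rintro ⟨w, hw, rfl⟩
    rw [mem_ball_zero_iff] at hw ⊢
    exact phi_lt ha hw
  · intro hz
    rw [mem_ball_zero_iff] at hz
    exact ⟨phi a z, by rw [mem_ball_zero_iff]; exact phi_lt ha hz, phi_phi ha hz⟩

lemma change_var {a : ℂ} (ha : ‖a‖ < 1) (g : ℂ → ENNReal) :
    ∫⁻ z in ball (0:ℂ) 1, g z = ∫⁻ w in ball (0:ℂ) 1,
      ENNReal.ofReal (((1 - ‖a‖ ^ 2) / ‖1 - (starRingEnd ℂ) a * w‖ ^ 2) ^ 2) * g (phi a w) := by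
  conv_lhs => rw [← phi_image ha]
  rw [lintegral_image_eq_lintegral_abs_det_fderiv_mul (f' := fun w =>
    (ContinuousLinearMap.toSpanSingleton ℂ
      (-(1 - (starRingEnd ℂ) a * a) / (1 - (starRingEnd ℂ) a * w) ^ 2)).restrictScalars ℝ)
    volume measurableSet_ball]
  · apply setLIntegral_congr_fun measurableSet_ball
    intro w hw
    dsimp only
    congr 2
    rw [← norm_phi_deriv ha]
    generalize (-(1 - (starRingEnd ℂ) a * a) / (1 - (starRingEnd ℂ) a * w) ^ 2) = c
    have : ((ContinuousLinearMap.toSpanSingleton ℂ c).restrictScalars ℝ).det = ‖c‖ ^ 2 := by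
      rw [ContinuousLinearMap.det]
      have := LinearMap.det_restrictScalars (R := ℝ) (S := ℂ)
        (f := (ContinuousLinearMap.toSpanSingleton ℂ c : ℂ →ₗ[ℂ] ℂ))
      refine Eq.trans this ?_
      have h2 := ContinuousLinearMap.det_toSpanSingleton c
      rw [ContinuousLinearMap.det] at h2
      rw [h2, Algebra.norm_complex_eq, ← Complex.normSq_eq_norm_sq]
      rfl
    rw [this, abs_of_nonneg (by positivity)]
  · intro w hw
    rw [mem_ball_zero_iff] at hw
    exact ((phi_hasDerivAt ha hw).hasFDerivAt.restrictScalars ℝ).hasFDerivWithinAt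
  · intro z hz w hw h
    rw [mem_ball_zero_iff] at hz hw
    rw [← phi_phi ha hz, ← phi_phi ha hw, h]

lemma comp_phi_hol {a : ℂ} (ha : ‖a‖ < 1) {f : ℂ → ℂ} (hf : HolOn f) :
    HolOn (fun w => f (phi a w)) := by
  apply DifferentiableOn.comp hf
  · intro w hw
    rw [mem_ball_zero_iff] at hw
    exact (phi_hasDerivAt ha hw).differentiableAt.differentiableWithinAt
  · intro w hw
    rw [mem_ball_zero_iff] at hw ⊢
    exact phi_lt ha hw

lemma norm_deriv_comp_phi {a : ℂ} (ha : ‖a‖ < 1) {f : ℂ → ℂ} (hf : HolOn f) {w : ℂ}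
    (hw : ‖w‖ < 1) : ‖deriv (fun w => f (phi a w)) w‖ = ‖deriv f (phi a w)‖ *
      ((1 - ‖a‖ ^ 2) / ‖1 - (starRingEnd ℂ) a * w‖ ^ 2) := by
  have h1 := hf.hasDerivAt (z := phi a w) (by rw [mem_ball_zero_iff]; exact phi_lt ha hw)
  have h2 := h1.comp w (phi_hasDerivAt ha hw)
  have h3 : deriv (fun w => f (phi a w)) w = _ := h2.deriv
  rw [h3, norm_mul, norm_phi_deriv ha]

/-- Möbius invariant Besov seminorm -/
noncomputable def NS (p : ℝ) (h : ℂ → ℂ) : ENNReal :=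
  ∫⁻ z in ball (0:ℂ) 1, ENNReal.ofReal ((1 - ‖z‖ ^ 2) ^ (p - 2) * ‖deriv h z‖ ^ p)

lemma NB_le_NS (p : ℝ) (hp : 2 < p) (h : ℂ → ℂ) : NB p h ≤ NS p h := by
  apply setLIntegral_mono' measurableSet_ball
  intro z hz
  rw [mem_ball_zero_iff] at hz
  have := norm_nonneg z
  gcongr
  · nlinarith

lemma NS_le_NB (p : ℝ) (hp : 2 < p) (h : ℂ → ℂ) :
    NS p h ≤ ENNReal.ofReal (2 ^ (p - 2)) * NB p h := by
  rw [NS, NB, ← lintegral_const_mul' _ _ ENNReal.ofReal_ne_top]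
  apply setLIntegral_mono' measurableSet_ball
  intro z hz
  rw [mem_ball_zero_iff] at hz
  have := norm_nonneg z
  have h1 : 0 < 1 - ‖z‖ := by linarith
  rw [← ENNReal.ofReal_mul (by positivity), ← mul_assoc, ← Real.mul_rpow (by norm_num) h1.le]
  gcongr
  · nlinarith
  · nlinarith

lemma NS_comp (p : ℝ) (hp : 2 < p) {a : ℂ} (ha : ‖a‖ < 1) {f : ℂ → ℂ} (hf : HolOn f) :
    NS p (fun w => f (phi a w)) = NS p f := by
  rw [NS, NS, change_var ha (fun z => ENNReal.ofReal ((1 - ‖z‖ ^ 2) ^ (p - 2) * ‖deriv f z‖ ^ p))]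
  apply setLIntegral_congr_fun measurableSet_ball
  intro w hw
  rw [mem_ball_zero_iff] at hw
  dsimp only
  rw [norm_deriv_comp_phi ha hf hw, ← ENNReal.ofReal_mul (by positivity), one_sub_phi ha hw]
  have h0 := (den_lower ha hw).2.2.1
  have h1 : 0 < 1 - ‖a‖ ^ 2 := by nlinarith [norm_nonneg a]
  have h2 : 0 < 1 - ‖w‖ ^ 2 := by nlinarith [norm_nonneg w]
  congr 1
  have e : (1 - ‖a‖ ^ 2) * (1 - ‖w‖ ^ 2) / ‖1 - (starRingEnd ℂ) a * w‖ ^ 2 =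
    ((1 - ‖a‖ ^ 2) / ‖1 - (starRingEnd ℂ) a * w‖ ^ 2) * (1 - ‖w‖ ^ 2) := by ring
  rw [e]
  have h3 : 0 < (1 - ‖a‖ ^ 2) / ‖1 - (starRingEnd ℂ) a * w‖ ^ 2 := by positivity
  generalize (1 - ‖a‖ ^ 2) / ‖1 - (starRingEnd ℂ) a * w‖ ^ 2 = J at h3 ⊢
  rw [Real.mul_rpow h3.le h2.le, Real.mul_rpow (norm_nonneg _) h3.le]
  have : J ^ p = J ^ 2 * J ^ (p - 2) := by
    rw [← Real.rpow_two, ← Real.rpow_add h3]; congr 1; ring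
  rw [this]; ring

lemma radial_lintegral (G : ℝ → ENNReal) (hG : Measurable G) (c : ℂ) (R : ℝ) :
    ∫⁻ z in ball c R, G ‖z - c‖ ≤
      ENNReal.ofReal (2 * π) * ∫⁻ r in Ioo 0 R, ENNReal.ofReal r * G r := by
  rw [← lintegral_indicator measurableSet_ball, polar_lintegral _ (by
    apply Measurable.indicator _ measurableSet_ball
    exact hG.comp (by fun_prop)) c]
  have key : ∀ r ∈ Ioi (0:ℝ), ∀ θ : ℝ,
      ENNReal.ofReal r * (ball c R).indicator (fun z => G ‖z - c‖) (circleMap c r θ) =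
        (Ioo 0 R).indicator (fun r => ENNReal.ofReal r * G r) r := by
    intro r hr θ
    have e : ‖circleMap c r θ - c‖ = r := by
      rw [circleMap_sub_center, norm_circleMap_zero, abs_of_pos hr]
    by_cases h : r < R
    · rw [indicator_of_mem (by rw [mem_ball, dist_eq_norm, e]; exact h), indicator_of_mem (show r ∈ Ioo 0 R from ⟨hr, h⟩), e]
    · rw [indicator_of_notMem (by rw [mem_ball, dist_eq_norm, e]; exact h),
        indicator_of_notMem (fun h' => h h'.2), mul_zero]
  calc _ = ∫⁻ r in Ioi (0:ℝ), ENNReal.ofReal (2 * π) *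
          (Ioo 0 R).indicator (fun r => ENNReal.ofReal r * G r) r := by
        apply setLIntegral_congr_fun measurableSet_Ioi
        intro r hr
        simp only [key r hr]
        rw [setLIntegral_const, Real.volume_Ioo, mul_comm]
        congr 2; ring
    _ ≤ _ := by
        rw [lintegral_const_mul' _ _ ENNReal.ofReal_ne_top]
        refine mul_le_mul_right ?_ _
        rw [← lintegral_indicator measurableSet_Ioo]
        exact setLIntegral_le_lintegral _ _

lemma weight_finite (c : ℝ) (hc : -1 < c) :
    ∫⁻ z in ball (0:ℂ) 1, ENNReal.ofReal ((1 - ‖z‖) ^ c) ≠ ⊤ := by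
  have h := radial_lintegral (fun r => ENNReal.ofReal ((1 - r) ^ c)) (by fun_prop) 0 1
  simp only [sub_zero] at h
  refine ne_top_of_le_ne_top (ENNReal.mul_ne_top ENNReal.ofReal_ne_top ?_) h
  have hi : IntervalIntegrable (fun r : ℝ => (1 - r) ^ c) volume 0 1 := by
    have := (intervalIntegral.intervalIntegrable_rpow' (a := 0) (b := 1) hc).comp_sub_left 1
    simpa using this.symm
  rw [intervalIntegrable_iff_integrableOn_Ioo_of_le zero_le_one] at hi
  have := hi.lintegral_lt_top
  refine ne_top_of_le_ne_top this.ne (setLIntegral_mono' measurableSet_Ioo ?_)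
  intro r hr
  calc _ ≤ 1 * ENNReal.ofReal ((1 - r) ^ c) := by
        gcongr; rw [← ENNReal.ofReal_one]; exact ENNReal.ofReal_le_ofReal hr.2.le
    _ = _ := one_mul _

lemma power_int (b : ℂ) (δ : ℝ) (h0 : 0 < δ) (h1 : δ ≤ 1) :
    ∫⁻ z in ball b 3, ENNReal.ofReal (‖z - b‖ ^ (-2 + δ)) ≤ ENNReal.ofReal (6 * π / δ) := by
  refine (radial_lintegral (fun r => ENNReal.ofReal (r ^ (-2 + δ))) (by fun_prop) b 3).trans ?_
  have hi : IntervalIntegrable (fun r : ℝ => r ^ (-1 + δ)) volume 0 3 :=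
    intervalIntegral.intervalIntegrable_rpow' (by linarith)
  have e : ∫⁻ r in Ioo (0:ℝ) 3, ENNReal.ofReal r * ENNReal.ofReal (r ^ (-2 + δ)) =
      ENNReal.ofReal (3 ^ δ / δ) := by
    have h2 : ∫ r in (0:ℝ)..3, r ^ (-1 + δ) = 3 ^ δ / δ := by
      rw [integral_rpow (Or.inl (by linarith))]
      rw [show -1 + δ + 1 = δ by ring, Real.zero_rpow h0.ne', sub_zero]
    rw [← h2, intervalIntegral.integral_of_le (by norm_num), ofReal_integral_eq_lintegral_ofReal hi.1,
      restrict_Ioo_eq_restrict_Ioc]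
    · apply setLIntegral_congr_fun measurableSet_Ioc
      intro r hr
      simp only
      rw [← ENNReal.ofReal_mul hr.1.le, show -1 + δ = (-2 + δ) + 1 by ring,
        Real.rpow_add_one hr.1.ne', mul_comm]
    · filter_upwards [ae_restrict_mem measurableSet_Ioc] with t ht
      exact Real.rpow_nonneg ht.1.le _
  rw [e, ← ENNReal.ofReal_mul (by positivity)]
  apply ENNReal.ofReal_le_ofReal
  have : (3:ℝ) ^ δ ≤ 3 := by
    calc (3:ℝ) ^ δ ≤ 3 ^ (1:ℝ) := Real.rpow_le_rpow_of_exponent_le (by norm_num) h1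
      _ = 3 := by norm_num
  calc 2 * π * (3 ^ δ / δ) ≤ 2 * π * (3 / δ) := by gcongr
    _ = _ := by ring

lemma den_int (a : ℂ) (ha : ‖a‖ < 1) (δ : ℝ) (h0 : 0 < δ) (h1 : δ ≤ 1) :
    ∫⁻ z in ball (0:ℂ) 1, ENNReal.ofReal (‖1 - (starRingEnd ℂ) a * z‖ ^ (-2 + δ)) ≤
      ENNReal.ofReal (24 * π / δ) := by
  by_cases h : ‖a‖ ≤ 1 / 2
  · calc _ ≤ ∫⁻ z in ball (0:ℂ) 1, ENNReal.ofReal 4 := by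
          apply setLIntegral_mono' measurableSet_ball
          intro z hz
          rw [mem_ball_zero_iff] at hz
          obtain ⟨-, h2, h3, -⟩ := den_lower ha hz
          apply ENNReal.ofReal_le_ofReal
          calc _ ≤ (1/2:ℝ) ^ (-2 + δ) :=
                Real.rpow_le_rpow_of_nonpos (by norm_num) (by linarith) (by linarith)
            _ ≤ (1/2:ℝ) ^ (-2:ℝ) :=
                Real.rpow_le_rpow_of_exponent_ge (by norm_num) (by norm_num) (by linarith)
            _ = 4 := by
                rw [Real.rpow_neg (by norm_num), Real.rpow_two]; norm_num
      _ ≤ _ := by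
          rw [setLIntegral_const, Complex.volume_ball]
          simp only [ENNReal.ofReal_one, one_pow, one_mul]
          rw [← ENNReal.ofReal_coe_nnreal, ← ENNReal.ofReal_mul (by norm_num)]
          apply ENNReal.ofReal_le_ofReal
          rw [le_div_iff₀ h0]
          have : (NNReal.pi : ℝ) = π := rfl
          rw [this]
          nlinarith [Real.pi_pos, mul_pos Real.pi_pos h0]
  · push Not at h
    have ha0 : (starRingEnd ℂ) a ≠ 0 := by
      intro h'; rw [map_eq_zero] at h'; rw [h', norm_zero] at h; norm_num at h
    set b := ((starRingEnd ℂ) a)⁻¹ with hb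
    have hbn : ‖b‖ < 2 := by
      rw [hb, norm_inv, RCLike.norm_conj, inv_lt_comm₀ (by linarith) (by norm_num)]; linarith
    have hsub : ball (0:ℂ) 1 ⊆ ball b 3 := by
      intro z hz
      rw [mem_ball_zero_iff] at hz
      rw [mem_ball, dist_eq_norm]
      have := norm_sub_le z b
      linarith
    calc _ ≤ ∫⁻ z in ball (0:ℂ) 1, ENNReal.ofReal 4 * ENNReal.ofReal (‖z - b‖ ^ (-2 + δ)) := by
          apply setLIntegral_mono' measurableSet_ball
          intro z hz
          rw [mem_ball_zero_iff] at hz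
          obtain ⟨-, h2, h3, -⟩ := den_lower ha hz
          rw [← ENNReal.ofReal_mul (by norm_num)]
          apply ENNReal.ofReal_le_ofReal
          have e : ‖1 - (starRingEnd ℂ) a * z‖ = ‖a‖ * ‖z - b‖ := by
            rw [← RCLike.norm_conj a, ← norm_mul, mul_sub, hb, mul_inv_cancel₀ ha0, norm_sub_rev]
          rw [e, Real.mul_rpow (norm_nonneg _) (norm_nonneg _)]
          gcongr
          calc _ ≤ (1/2:ℝ) ^ (-2 + δ) :=
                Real.rpow_le_rpow_of_nonpos (by norm_num) (by linarith) (by linarith)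
            _ ≤ (1/2:ℝ) ^ (-2:ℝ) :=
                Real.rpow_le_rpow_of_exponent_ge (by norm_num) (by norm_num) (by linarith)
            _ = 4 := by
                rw [Real.rpow_neg (by norm_num), Real.rpow_two]; norm_num
      _ ≤ ENNReal.ofReal 4 * ∫⁻ z in ball b 3, ENNReal.ofReal (‖z - b‖ ^ (-2 + δ)) := by
          rw [lintegral_const_mul' _ _ ENNReal.ofReal_ne_top]
          gcongr
      _ ≤ ENNReal.ofReal 4 * ENNReal.ofReal (6 * π / δ) := by
          gcongr; exact power_int b δ h0 h1
      _ = _ := by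
          rw [← ENNReal.ofReal_mul (by norm_num)]; congr 1; ring

lemma ell_ge {x : ℝ} (h0 : 0 ≤ x) (h1 : x < 1) : Real.log 2 ≤ Real.log (2 / (1 - x)) := by
  apply Real.log_le_log (by norm_num)
  rw [le_div_iff₀ (by linarith)]; linarith

lemma ell_half {x : ℝ} (h0 : 0 ≤ x) (h1 : x < 1) : 1 / 2 < Real.log (2 / (1 - x)) := by
  have := ell_ge h0 h1
  have := Real.log_two_gt_d9
  linarith

lemma den_int_log (a : ℂ) (ha : ‖a‖ < 1) :
    ∫⁻ z in ball (0:ℂ) 1, ENNReal.ofReal (‖1 - (starRingEnd ℂ) a * z‖ ^ (-2:ℝ)) ≤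
      ENNReal.ofReal (144 * π * Real.log (2 / (1 - ‖a‖))) := by
  set l := Real.log (2 / (1 - ‖a‖)) with hl
  have hl2 : 1 / 2 < l := ell_half (norm_nonneg a) ha
  set δ := 1 / (2 * l) with hδ
  have hd0 : 0 < δ := by positivity
  have hd1 : δ ≤ 1 := by
    rw [hδ, div_le_one (by linarith)]; linarith
  calc _ ≤ ∫⁻ z in ball (0:ℂ) 1, ENNReal.ofReal 3 *
        ENNReal.ofReal (‖1 - (starRingEnd ℂ) a * z‖ ^ (-2 + δ)) := by
          apply setLIntegral_mono' measurableSet_ball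
          intro z hz
          rw [mem_ball_zero_iff] at hz
          obtain ⟨-, h2, h3, -⟩ := den_lower ha hz
          rw [← ENNReal.ofReal_mul (by norm_num)]
          apply ENNReal.ofReal_le_ofReal
          have e : ‖1 - (starRingEnd ℂ) a * z‖ ^ (-2:ℝ) = ‖1 - (starRingEnd ℂ) a * z‖ ^ (-δ) *
              ‖1 - (starRingEnd ℂ) a * z‖ ^ (-2 + δ) := by
            rw [← Real.rpow_add h3]; congr 1; ring
          rw [e]
          gcongr
          have h1a : 0 < 1 - ‖a‖ := by linarith
          calc _ ≤ (1 - ‖a‖) ^ (-δ) := Real.rpow_le_rpow_of_nonpos h1a h2 (by linarith)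
            _ = (1 / (1 - ‖a‖)) ^ δ := by
              rw [Real.rpow_neg h1a.le, one_div, Real.inv_rpow h1a.le]
            _ ≤ (2 / (1 - ‖a‖)) ^ δ := by gcongr; norm_num
            _ = Real.exp (l * δ) := by rw [Real.rpow_def_of_pos (by positivity)]
            _ ≤ Real.exp 1 := by
              apply Real.exp_le_exp.2
              rw [hδ]; field_simp; norm_num
            _ ≤ 3 := Real.exp_one_lt_d9.le.trans (by norm_num)
    _ ≤ ENNReal.ofReal 3 * ENNReal.ofReal (24 * π / δ) := by
          rw [lintegral_const_mul' _ _ ENNReal.ofReal_ne_top]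
          gcongr
          exact den_int a ha δ hd0 hd1
    _ = _ := by
          rw [← ENNReal.ofReal_mul (by norm_num)]; congr 1
          rw [hδ]; field_simp; ring

lemma one_sub_sq_bounds {x : ℝ} (h0 : 0 ≤ x) (h1 : x < 1) :
    0 < 1 - x ∧ 0 < 1 - x ^ 2 ∧ 1 - x ≤ 1 - x ^ 2 ∧ 1 - x ^ 2 ≤ 2 * (1 - x) ∧ 1 - x ^ 2 ≤ 1 := by
  refine ⟨by linarith, by nlinarith, by nlinarith, by nlinarith, by nlinarith⟩

lemma weight_finite_sq (c : ℝ) (hc : -1 < c) :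
    ∫⁻ z in ball (0:ℂ) 1, ENNReal.ofReal ((1 - ‖z‖ ^ 2) ^ c) ≠ ⊤ := by
  refine ne_top_of_le_ne_top (ENNReal.mul_ne_top (ENNReal.ofReal_ne_top (r := 2 ^ |c|))
    (weight_finite c hc)) ?_
  rw [← lintegral_const_mul' _ _ ENNReal.ofReal_ne_top]
  apply setLIntegral_mono' measurableSet_ball
  intro z hz
  rw [mem_ball_zero_iff] at hz
  obtain ⟨h1, h2, h3, h4, h5⟩ := one_sub_sq_bounds (norm_nonneg z) hz
  rw [← ENNReal.ofReal_mul (by positivity)]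
  apply ENNReal.ofReal_le_ofReal
  rcases le_or_gt 0 c with h | h
  · rw [abs_of_nonneg h, ← Real.mul_rpow (by norm_num) h1.le]
    exact Real.rpow_le_rpow h2.le h4 h
  · calc _ ≤ (1 - ‖z‖) ^ c := Real.rpow_le_rpow_of_nonpos h1 h3 h.le
      _ = 1 * (1 - ‖z‖) ^ c := (one_mul _).symm
      _ ≤ _ := by
        gcongr
        exact Real.one_le_rpow (by norm_num) (abs_nonneg c)

lemma intA (p s : ℝ) (hp : 2 < p) (hs : 1 - 2 / p < s) : ∃ C : ENNReal, C ≠ ⊤ ∧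
    ∀ h : ℂ → ℂ, ∫⁻ w in ball (0:ℂ) 1, ENNReal.ofReal (‖deriv h w‖ ^ 2 * (1 - ‖w‖ ^ 2) ^ s) ≤
      C * NS p h ^ (2 / p) := by
  have hp0 : 0 < p := by linarith
  have hp2 : 0 < p - 2 := by linarith
  have hexp : -1 < s * (p / (p - 2)) - 2 := by
    have : 1 - 2 / p = (p - 2) / p := by field_simp
    rw [this, div_lt_iff₀ hp0] at hs
    have : 1 < s * (p / (p - 2)) := by
      rw [← mul_div_assoc, lt_div_iff₀ hp2]; linarith
    linarith
  refine ⟨(∫⁻ z in ball (0:ℂ) 1, ENNReal.ofReal ((1 - ‖z‖ ^ 2) ^ (s * (p / (p - 2)) - 2))) ^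
    (1 / (p / (p - 2))), ?_, ?_⟩
  · exact ENNReal.rpow_ne_top_of_nonneg (by positivity) (weight_finite_sq _ hexp)
  intro h
  have hpq : (p / 2).HolderConjugate (p / (p - 2)) := by
    rw [Real.holderConjugate_iff]
    refine ⟨by linarith, ?_⟩
    field_simp; ring
  have hm := measurable_deriv h
  have key := ENNReal.lintegral_mul_le_Lp_mul_Lq (volume.restrict (ball (0:ℂ) 1)) hpq
    (f := fun w => ENNReal.ofReal (‖deriv h w‖ ^ 2 * (1 - ‖w‖ ^ 2) ^ ((p - 2) / (p / 2))))
    (g := fun w => ENNReal.ofReal ((1 - ‖w‖ ^ 2) ^ (s - (p - 2) / (p / 2))))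
    (by fun_prop) (by fun_prop)
  have e1 : ∫⁻ w in ball (0:ℂ) 1, ENNReal.ofReal (‖deriv h w‖ ^ 2 * (1 - ‖w‖ ^ 2) ^ s) =
      ∫⁻ w in ball (0:ℂ) 1, ((fun w : ℂ => ENNReal.ofReal (‖deriv h w‖ ^ 2 * (1 - ‖w‖ ^ 2) ^ ((p - 2) / (p / 2)))) *
      (fun w : ℂ => ENNReal.ofReal ((1 - ‖w‖ ^ 2) ^ (s - (p - 2) / (p / 2)))) : ℂ → ENNReal) w := by
    apply setLIntegral_congr_fun measurableSet_ball
    intro w hw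
    rw [mem_ball_zero_iff] at hw
    obtain ⟨h1, h2, h3, h4, h5⟩ := one_sub_sq_bounds (norm_nonneg w) hw
    simp only [Pi.mul_apply]
    rw [← ENNReal.ofReal_mul (by positivity), mul_assoc, ← Real.rpow_add h2]
    congr 3; ring
  rw [e1]
  refine key.trans ?_
  rw [mul_comm]
  have e2 : ∫⁻ w in ball (0:ℂ) 1, ENNReal.ofReal (‖deriv h w‖ ^ 2 * (1 - ‖w‖ ^ 2) ^ ((p - 2) / (p / 2))) ^ (p / 2)
      = NS p h := by
    rw [NS]
    apply setLIntegral_congr_fun measurableSet_ball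
    intro w hw
    rw [mem_ball_zero_iff] at hw
    obtain ⟨h1, h2, h3, h4, h5⟩ := one_sub_sq_bounds (norm_nonneg w) hw
    simp only
    rw [ENNReal.ofReal_rpow_of_nonneg (by positivity) (by positivity),
      Real.mul_rpow (by positivity) (by positivity), ← Real.rpow_mul h2.le,
      ← Real.rpow_natCast, ← Real.rpow_mul (norm_nonneg _), mul_comm]
    congr 3
    · field_simp
    · push_cast; field_simp
  have e3 : ∫⁻ w in ball (0:ℂ) 1, ENNReal.ofReal ((1 - ‖w‖ ^ 2) ^ (s - (p - 2) / (p / 2))) ^ (p / (p - 2))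
      = ∫⁻ z in ball (0:ℂ) 1, ENNReal.ofReal ((1 - ‖z‖ ^ 2) ^ (s * (p / (p - 2)) - 2)) := by
    apply setLIntegral_congr_fun measurableSet_ball
    intro w hw
    rw [mem_ball_zero_iff] at hw
    obtain ⟨h1, h2, h3, h4, h5⟩ := one_sub_sq_bounds (norm_nonneg w) hw
    simp only
    rw [ENNReal.ofReal_rpow_of_nonneg (by positivity) (by positivity), ← Real.rpow_mul h2.le]
    congr 2
    field_simp
  rw [e2, e3, one_div_div p 2]

lemma growth2 (p : ℝ) (hp : 2 < p) : ∃ C : ENNReal, C ≠ ⊤ ∧ ∀ h : ℂ → ℂ, HolOn h → ∀ z : ℂ, ‖z‖ < 1 →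
    ENNReal.ofReal (‖h z - h 0‖ ^ 2) ≤
      C * NS p h ^ (2 / p) * ENNReal.ofReal (Real.log (2 / (1 - ‖z‖)) ^ (2 - 2 / p)) := by
  have hp0 : 0 < p := by linarith
  refine ⟨(6 * ENNReal.ofReal (2 ^ (p - 1))) ^ (2 / p), ?_, ?_⟩
  · exact ENNReal.rpow_ne_top_of_nonneg (by positivity)
      (ENNReal.mul_ne_top (by norm_num) ENNReal.ofReal_ne_top)
  intro h hh z hz
  have hl : 0 < Real.log (2 / (1 - ‖z‖)) := by linarith [ell_half (norm_nonneg z) hz]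
  have h1 := ENNReal.rpow_le_rpow (growth p hp h hh z hz) (z := 2 / p) (by positivity)
  rw [ENNReal.ofReal_rpow_of_nonneg (by positivity) (by positivity), ← Real.rpow_mul (norm_nonneg _),
    mul_div_cancel₀ _ hp0.ne', Real.rpow_two, ENNReal.mul_rpow_of_nonneg _ _ (by positivity),
    ← mul_assoc, ENNReal.mul_rpow_of_nonneg _ _ (by positivity),
    ENNReal.ofReal_rpow_of_nonneg (by positivity) (by positivity), ← Real.rpow_mul hl.le,
    show (p - 1) * (2 / p) = 2 - 2 / p by field_simp] at h1
  refine h1.trans ?_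
  gcongr
  exact NB_le_NS p hp h

lemma log_pow_le (κ ε : ℝ) (hκ : 0 < κ) (hε : 0 < ε) : ∃ C : ℝ, 0 < C ∧ ∀ x : ℝ, 0 < x → x ≤ 1 →
    Real.log (2 / x) ^ κ ≤ C * x ^ (-ε) := by
  refine ⟨2 ^ ε / (ε / κ) ^ κ, by positivity, ?_⟩
  intro x h0 h1
  have hl : 0 ≤ Real.log (2 / x) := Real.log_nonneg (by rw [le_div_iff₀ h0]; linarith)
  calc _ ≤ ((2 / x) ^ (ε / κ) / (ε / κ)) ^ κ :=
        Real.rpow_le_rpow hl (Real.log_le_rpow_div (by positivity) (by positivity)) hκ.le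
    _ = _ := by
        rw [Real.div_rpow (by positivity) (by positivity), ← Real.rpow_mul (by positivity),
          div_mul_cancel₀ _ hκ.ne', Real.div_rpow (by norm_num) h0.le, Real.rpow_neg h0.le]
        ring

lemma intB (p s : ℝ) (hp : 2 < p) (hs0 : 0 < s) (hs1 : s < 1) : ∃ C : ENNReal, C ≠ ⊤ ∧
    ∀ h : ℂ → ℂ, HolOn h → ∀ a : ℂ, ‖a‖ < 1 →
    ∫⁻ w in ball (0:ℂ) 1, ENNReal.ofReal (‖h w - h 0‖ ^ 2 * ((1 - ‖w‖ ^ 2) ^ s /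
      ‖1 - (starRingEnd ℂ) a * w‖ ^ 2)) ≤ C * NS p h ^ (2 / p) := by
  obtain ⟨C, hC, hg⟩ := growth2 p hp
  have hp0 : 0 < p := by linarith
  have hκ : 0 < 2 - 2 / p := by
    have : 2 / p < 2 := by rw [div_lt_iff₀ hp0]; linarith
    linarith
  obtain ⟨K, hK, hlog⟩ := log_pow_le (2 - 2 / p) (s / 2) hκ (by positivity)
  refine ⟨C * ENNReal.ofReal (K * 2 ^ s) * ENNReal.ofReal (24 * π / (s / 2)), ?_, ?_⟩
  · exact ENNReal.mul_ne_top (ENNReal.mul_ne_top hC ENNReal.ofReal_ne_top) ENNReal.ofReal_ne_top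
  intro h hh a ha
  by_cases hN : NS p h ^ (2 / p) = ⊤
  · rw [hN]
    by_cases hC0 : C = 0
    · have : ∀ w ∈ ball (0:ℂ) 1, ENNReal.ofReal (‖h w - h 0‖ ^ 2 * ((1 - ‖w‖ ^ 2) ^ s /
        ‖1 - (starRingEnd ℂ) a * w‖ ^ 2)) = 0 := by
        intro w hw
        rw [mem_ball_zero_iff] at hw
        have := hg h hh w hw
        rw [hC0] at this
        simp only [zero_mul, nonpos_iff_eq_zero, ENNReal.ofReal_eq_zero] at this
        have h0 : ‖h w - h 0‖ ^ 2 = 0 := le_antisymm this (by positivity)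
        rw [h0]; simp
      rw [setLIntegral_congr_fun measurableSet_ball this]
      simp
    · rw [ENNReal.mul_top]
      · exact le_top
      · have := Real.pi_pos
        simp only [ne_eq, mul_eq_zero, not_or, ENNReal.ofReal_eq_zero, not_le]
        refine ⟨⟨hC0, by positivity⟩, by positivity⟩
  calc _ ≤ ∫⁻ w in ball (0:ℂ) 1, (C * NS p h ^ (2 / p) * ENNReal.ofReal (K * 2 ^ s)) *
        ENNReal.ofReal (‖1 - (starRingEnd ℂ) a * w‖ ^ (-2 + s / 2)) := by
        apply setLIntegral_mono' measurableSet_ball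
        intro w hw
        rw [mem_ball_zero_iff] at hw
        obtain ⟨h1, h2, h3, h4, h5⟩ := one_sub_sq_bounds (norm_nonneg w) hw
        obtain ⟨d1, d2, d3, d4⟩ := den_lower ha hw
        rw [ENNReal.ofReal_mul (by positivity)]
        calc _ ≤ C * NS p h ^ (2 / p) * ENNReal.ofReal (Real.log (2 / (1 - ‖w‖)) ^ (2 - 2 / p)) *
            ENNReal.ofReal ((1 - ‖w‖ ^ 2) ^ s / ‖1 - (starRingEnd ℂ) a * w‖ ^ 2) := by
              gcongr; exact hg h hh w hw
          _ ≤ _ := by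
            have hl : 0 < Real.log (2 / (1 - ‖w‖)) := by linarith [ell_half (norm_nonneg w) hw]
            rw [mul_assoc, mul_assoc (C * _), ← ENNReal.ofReal_mul (by positivity),
              ← ENNReal.ofReal_mul (by positivity)]
            refine mul_le_mul_right (ENNReal.ofReal_le_ofReal ?_) _
            have hw1 : 1 - ‖w‖ ≤ 1 := by linarith [norm_nonneg w]
            calc _ ≤ (K * (1 - ‖w‖) ^ (-(s / 2))) * ((2 * (1 - ‖w‖)) ^ s / ‖1 - (starRingEnd ℂ) a * w‖ ^ 2) := by
                  gcongr
                  exact hlog _ h1 hw1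
              _ = K * 2 ^ s * ((1 - ‖w‖) ^ (s / 2) / ‖1 - (starRingEnd ℂ) a * w‖ ^ 2) := by
                  rw [Real.mul_rpow (by norm_num) h1.le]
                  have : (1 - ‖w‖) ^ (s / 2) = (1 - ‖w‖) ^ (-(s / 2)) * (1 - ‖w‖) ^ s := by
                    rw [← Real.rpow_add h1]; congr 1; ring
                  rw [this]; ring
              _ ≤ K * 2 ^ s * (‖1 - (starRingEnd ℂ) a * w‖ ^ (s / 2) / ‖1 - (starRingEnd ℂ) a * w‖ ^ 2) := by
                  gcongr
              _ = _ := by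
                  rw [show -2 + s / 2 = s / 2 + -2 by ring, Real.rpow_add d3, Real.rpow_neg d3.le, Real.rpow_two]; rfl
    _ ≤ (C * NS p h ^ (2 / p) * ENNReal.ofReal (K * 2 ^ s)) * ENNReal.ofReal (24 * π / (s / 2)) := by
        rw [lintegral_const_mul' _ _ (ENNReal.mul_ne_top (ENNReal.mul_ne_top hC hN) ENNReal.ofReal_ne_top)]
        gcongr
        exact den_int a ha _ (by positivity) (by linarith)
    _ = _ := by ring

lemma Tg_prop (g f : ℂ → ℂ) (hg : HolOn g) (hf : HolOn f) :
    HolOn (Tg g f) ∧ ∀ z ∈ ball (0:ℂ) 1, deriv (Tg g f) z = deriv g z * f z := by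
  have hH : HolOn (fun z => deriv g z * f z) := hg.deriv.mul hf
  obtain ⟨F, hF⟩ := DifferentiableOn.isExactOn_ball hH
  have e : ∀ z ∈ ball (0:ℂ) 1, Tg g f z = F z - F 0 := by
    intro z hz
    rw [mem_ball_zero_iff] at hz
    rw [ftc_radial F _ hF hH z hz]; rfl
  have hd : ∀ z ∈ ball (0:ℂ) 1, HasDerivAt (Tg g f) (deriv g z * f z) z := by
    intro z hz
    refine HasDerivAt.congr_of_eventuallyEq ((hF z hz).sub_const (F 0)) ?_
    filter_upwards [isOpen_ball.mem_nhds hz] with w hw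
    exact e w hw
  exact ⟨fun z hz => (hd z hz).differentiableAt.differentiableWithinAt, fun z hz => (hd z hz).deriv⟩

lemma lint_dA (f : ℂ → ENNReal) : ∫⁻ z in ball (0:ℂ) 1, f z ∂dA =
    (ENNReal.ofReal π)⁻¹ * ∫⁻ z in ball (0:ℂ) 1, f z := by
  rw [dA, Measure.restrict_smul, lintegral_smul_measure, smul_eq_mul]

lemma pi_inv_ne : (ENNReal.ofReal π)⁻¹ ≠ 0 ∧ (ENNReal.ofReal π)⁻¹ ≠ ⊤ := by
  refine ⟨by simp, by simp [Real.pi_pos]⟩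

lemma mem_Besov (p : ℝ) (f : ℂ → ℂ) : f ∈ Besov p ↔ HolOn f ∧ NB p f < ⊤ := by
  simp only [Besov, mem_ofPred_eq, lint_dA, NB]
  refine and_congr_right fun _ => ?_
  rw [ENNReal.mul_lt_top_iff]
  constructor
  · rintro (h | h | h)
    · exact h.2
    · exact absurd h pi_inv_ne.1
    · rw [h]; exact ENNReal.zero_lt_top
  · intro h; exact Or.inl ⟨lt_top_iff_ne_top.2 pi_inv_ne.2, h⟩

/-- the Qs integral -/
noncomputable def IQ (s : ℝ) (f : ℂ → ℂ) (a : ℂ) : ENNReal :=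
  ∫⁻ z in ball (0:ℂ) 1, ENNReal.ofReal (‖deriv f z‖ ^ 2 * (1 - ‖phi a z‖ ^ 2) ^ s)

lemma sup_aux (J : ℂ → ENNReal) : (⨆ a ∈ ball (0:ℂ) 1, (ENNReal.ofReal π)⁻¹ * J a) < ⊤ ↔
    ∃ K : ENNReal, K ≠ ⊤ ∧ ∀ a : ℂ, ‖a‖ < 1 → J a ≤ K := by
  obtain ⟨h0, h1⟩ := pi_inv_ne
  simp only [← ENNReal.mul_iSup]
  constructor
  · intro h
    refine ⟨⨆ a ∈ ball (0:ℂ) 1, J a, ?_, ?_⟩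
    · intro h'
      rw [h', ENNReal.mul_top h0] at h
      exact lt_irrefl _ h
    · intro a ha
      exact le_iSup₂ (f := fun a (_ : a ∈ ball (0:ℂ) 1) => J a) a (mem_ball_zero_iff.2 ha)
  · rintro ⟨K, hK, h⟩
    refine ENNReal.mul_lt_top (lt_top_iff_ne_top.2 h1) (lt_of_le_of_lt ?_ (lt_top_iff_ne_top.2 hK))
    exact iSup₂_le fun a ha => h a (mem_ball_zero_iff.1 ha)

lemma mem_Qs (s : ℝ) (f : ℂ → ℂ) : f ∈ Qs s ↔ HolOn f ∧ ∃ K : ENNReal, K ≠ ⊤ ∧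
    ∀ a : ℂ, ‖a‖ < 1 → IQ s f a ≤ K := by
  simp only [Qs, mem_ofPred_eq, lint_dA]
  rw [← sup_aux]; rfl

lemma mem_QsLog (s α : ℝ) (f : ℂ → ℂ) : f ∈ QsLog s α ↔ HolOn f ∧ ∃ K : ENNReal, K ≠ ⊤ ∧
    ∀ a : ℂ, ‖a‖ < 1 → ENNReal.ofReal (Real.log (2 / (1 - ‖a‖)) ^ (2 * α)) * IQ s f a ≤ K := by
  simp only [QsLog, mem_ofPred_eq, lint_dA]
  rw [← sup_aux]
  simp only [IQ, mul_left_comm (ENNReal.ofReal π)⁻¹]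

lemma carleson (κ s : ℝ) (hκ : 1 < κ) (hs : 0 < s) : ∃ C : ENNReal, C ≠ ⊤ ∧
    ∀ (g : ℂ → ℂ) (M : ENNReal),
    (∀ a : ℂ, ‖a‖ < 1 → ENNReal.ofReal (Real.log (2 / (1 - ‖a‖)) ^ κ) * IQ s g a ≤ M) →
    ∀ F : ℂ → ℂ, HolOn F →
    ∫⁻ z in ball (0:ℂ) 1, ENNReal.ofReal (‖F z - F 0‖ ^ 2) *
        ENNReal.ofReal (‖deriv g z‖ ^ 2 * (1 - ‖z‖ ^ 2) ^ s) ≤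
      C * (M * ∫⁻ u in ball (0:ℂ) 1, ENNReal.ofReal (‖deriv F u‖ ^ 2 * (1 - ‖u‖ ^ 2) ^ s)) := by
  obtain ⟨C, hC, hE⟩ := embedding κ s hκ hs
  refine ⟨C, hC, ?_⟩
  intro g M hM F hF
  have hm := measurable_deriv g
  have hm' := measurable_deriv F
  calc _ ≤ ∫⁻ z in ball (0:ℂ) 1, C * ∫⁻ u in ball (0:ℂ) 1,
      ENNReal.ofReal (‖deriv F u‖ ^ 2 * (Real.log (2 / (1 - ‖u‖)) ^ κ * (1 - ‖u‖) ^ (2 * s) /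
        ‖1 - (starRingEnd ℂ) u * z‖ ^ (2 * s))) *
        ENNReal.ofReal (‖deriv g z‖ ^ 2 * (1 - ‖z‖ ^ 2) ^ s) := by
        apply setLIntegral_mono' measurableSet_ball
        intro z hz
        rw [mem_ball_zero_iff] at hz
        rw [lintegral_mul_const' _ _ ENNReal.ofReal_ne_top, ← mul_assoc]
        gcongr
        exact hE F hF z hz
    _ = C * ∫⁻ u in ball (0:ℂ) 1, ∫⁻ z in ball (0:ℂ) 1,
      ENNReal.ofReal (‖deriv F u‖ ^ 2 * (Real.log (2 / (1 - ‖u‖)) ^ κ * (1 - ‖u‖) ^ (2 * s) /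
        ‖1 - (starRingEnd ℂ) u * z‖ ^ (2 * s))) *
        ENNReal.ofReal (‖deriv g z‖ ^ 2 * (1 - ‖z‖ ^ 2) ^ s) := by
        rw [lintegral_const_mul' _ _ hC, lintegral_lintegral_swap]
        apply Measurable.aemeasurable
        unfold Function.uncurry
        fun_prop
    _ ≤ _ := by
        refine mul_le_mul_right ?_ _
        calc _ ≤ ∫⁻ u in ball (0:ℂ) 1, ENNReal.ofReal (‖deriv F u‖ ^ 2 * (1 - ‖u‖ ^ 2) ^ s) * M := by
              apply setLIntegral_mono' measurableSet_ball
              intro u hu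
              rw [mem_ball_zero_iff] at hu
              obtain ⟨h1, h2, h3, h4, h5⟩ := one_sub_sq_bounds (norm_nonneg u) hu
              have hl : 0 < Real.log (2 / (1 - ‖u‖)) := by linarith [ell_half (norm_nonneg u) hu]
              refine le_trans ?_ (mul_le_mul_right (hM u hu) _)
              rw [← mul_assoc, IQ, ← lintegral_const_mul' _ _
                (ENNReal.mul_ne_top ENNReal.ofReal_ne_top ENNReal.ofReal_ne_top)]
              apply setLIntegral_mono' measurableSet_ball
              intro z hz
              rw [mem_ball_zero_iff] at hz
              obtain ⟨h1', h2', h3', h4', h5'⟩ := one_sub_sq_bounds (norm_nonneg z) hz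
              obtain ⟨d1, d2, d3, d4⟩ := den_lower hu hz
              rw [one_sub_phi hu hz, ← ENNReal.ofReal_mul (by positivity),
                ← ENNReal.ofReal_mul (by positivity), ← ENNReal.ofReal_mul (by positivity)]
              apply ENNReal.ofReal_le_ofReal
              rw [Real.div_rpow (by positivity) (by positivity), Real.mul_rpow h2.le h2'.le,
                ← Real.rpow_natCast ‖1 - (starRingEnd ℂ) u * z‖, ← Real.rpow_mul d3.le, two_mul s,
                Real.rpow_add h1]
              push_cast
              rw [← two_mul]
              calc _ = ‖deriv F u‖ ^ 2 * Real.log (2 / (1 - ‖u‖)) ^ κ * ‖deriv g z‖ ^ 2 *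
                    (1 - ‖z‖ ^ 2) ^ s / ‖1 - (starRingEnd ℂ) u * z‖ ^ (2 * s) *
                    ((1 - ‖u‖) ^ s * (1 - ‖u‖) ^ s) := by ring
                _ ≤ ‖deriv F u‖ ^ 2 * Real.log (2 / (1 - ‖u‖)) ^ κ * ‖deriv g z‖ ^ 2 *
                    (1 - ‖z‖ ^ 2) ^ s / ‖1 - (starRingEnd ℂ) u * z‖ ^ (2 * s) *
                    ((1 - ‖u‖ ^ 2) ^ s * (1 - ‖u‖ ^ 2) ^ s) := by gcongr
                _ = _ := by ring
          _ = _ := by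
              rw [lintegral_mul_const _ (by fun_prop), mul_comm]

lemma cpow_facts {a : ℂ} (ha : ‖a‖ < 1) (s : ℝ) {f : ℂ → ℂ} (hf : HolOn f) (z : ℂ) (hz : ‖z‖ < 1) :
    ‖(f z - f a) * (1 - (starRingEnd ℂ) a * z) ^ (-(s:ℂ))‖ =
      ‖f z - f a‖ * ‖1 - (starRingEnd ℂ) a * z‖ ^ (-s) ∧
    HasDerivAt (fun z => (f z - f a) * (1 - (starRingEnd ℂ) a * z) ^ (-(s:ℂ)))
      (deriv f z * (1 - (starRingEnd ℂ) a * z) ^ (-(s:ℂ)) + (f z - f a) *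
        ((-(s:ℂ)) * (1 - (starRingEnd ℂ) a * z) ^ (-(s:ℂ) - 1) * (-(starRingEnd ℂ) a))) z := by
  have hne := den_ne ha hz
  have hsl : 1 - (starRingEnd ℂ) a * z ∈ slitPlane := by
    left
    have : ((starRingEnd ℂ) a * z).re ≤ ‖(starRingEnd ℂ) a * z‖ := Complex.re_le_norm _
    rw [norm_mul, RCLike.norm_conj] at this
    simp only [sub_re, one_re]
    nlinarith [norm_nonneg a, norm_nonneg z]
  constructor
  · rw [norm_mul, ← Complex.ofReal_neg, Complex.norm_cpow_real]
  · have h1 := (hf.hasDerivAt (mem_ball_zero_iff.2 hz)).sub_const (f a)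
    have h2 : HasDerivAt (fun z : ℂ => 1 - (starRingEnd ℂ) a * z) (-((starRingEnd ℂ) a)) z := by
      simpa using ((hasDerivAt_id z).const_mul ((starRingEnd ℂ) a)).const_sub 1
    exact h1.mul (h2.cpow_const hsl)

lemma phi_zero (a : ℂ) : phi a 0 = a := by simp [phi]

lemma w_expand {a z : ℂ} (ha : ‖a‖ < 1) (hz : ‖z‖ < 1) (s : ℝ) :
    (1 - ‖phi a z‖ ^ 2) ^ s = (1 - ‖a‖ ^ 2) ^ s * ((1 - ‖z‖ ^ 2) ^ s *
      (‖1 - (starRingEnd ℂ) a * z‖ ^ (-s)) ^ 2) := by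
  obtain ⟨h1, h2, h3, h4, h5⟩ := one_sub_sq_bounds (norm_nonneg a) ha
  obtain ⟨h1', h2', h3', h4', h5'⟩ := one_sub_sq_bounds (norm_nonneg z) hz
  obtain ⟨d1, d2, d3, d4⟩ := den_lower ha hz
  rw [one_sub_phi ha hz, Real.div_rpow (by positivity) (by positivity), Real.mul_rpow h2.le h2'.le,
    ← Real.rpow_natCast ‖1 - (starRingEnd ℂ) a * z‖, ← Real.rpow_mul d3.le,
    ← Real.rpow_natCast (‖1 - (starRingEnd ℂ) a * z‖ ^ (-s)), ← Real.rpow_mul d3.le, div_eq_mul_inv,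
    ← Real.rpow_neg d3.le, mul_assoc]
  congr 4
  push_cast; ring

lemma cv1 {a : ℂ} (ha : ‖a‖ < 1) {f : ℂ → ℂ} (hf : HolOn f) (s : ℝ) :
    IQ s f a = ∫⁻ w in ball (0:ℂ) 1, ENNReal.ofReal (‖deriv (fun w => f (phi a w)) w‖ ^ 2 *
      (1 - ‖w‖ ^ 2) ^ s) := by
  rw [IQ, change_var ha]
  apply setLIntegral_congr_fun measurableSet_ball
  intro w hw
  rw [mem_ball_zero_iff] at hw
  simp only
  rw [phi_phi ha hw, norm_deriv_comp_phi ha hf hw, ← ENNReal.ofReal_mul (by positivity)]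
  congr 1; ring

lemma cv2 {a : ℂ} (ha : ‖a‖ < 1) (f : ℂ → ℂ) (s : ℝ) :
    ∫⁻ z in ball (0:ℂ) 1, ENNReal.ofReal (‖f z - f a‖ ^ 2 * ((1 - ‖phi a z‖ ^ 2) ^ s /
      ‖1 - (starRingEnd ℂ) a * z‖ ^ 2)) =
    ∫⁻ w in ball (0:ℂ) 1, ENNReal.ofReal (‖f (phi a w) - f (phi a 0)‖ ^ 2 * ((1 - ‖w‖ ^ 2) ^ s /
      ‖1 - (starRingEnd ℂ) a * w‖ ^ 2)) := by
  rw [change_var ha]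
  apply setLIntegral_congr_fun measurableSet_ball
  intro w hw
  rw [mem_ball_zero_iff] at hw
  simp only
  obtain ⟨h1, h2, h3, h4, h5⟩ := one_sub_sq_bounds (norm_nonneg a) ha
  obtain ⟨d1, d2, d3, d4⟩ := den_lower ha hw
  have e : ‖1 - (starRingEnd ℂ) a * phi a w‖ = (1 - ‖a‖ ^ 2) / ‖1 - (starRingEnd ℂ) a * w‖ := by
    have : 1 - (starRingEnd ℂ) a * phi a w = ((1 - ‖a‖ ^ 2 : ℝ) : ℂ) / (1 - (starRingEnd ℂ) a * w) := by
      rw [phi, eq_div_iff (den_ne ha hw), sub_mul, mul_assoc, div_mul_cancel₀ _ (den_ne ha hw)]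
      rw [← Complex.normSq_eq_norm_sq]
      push_cast
      rw [Complex.normSq_eq_conj_mul_self]
      ring
    rw [this, norm_div, Complex.norm_real, Real.norm_of_nonneg h2.le]
  rw [phi_phi ha hw, phi_zero, ← ENNReal.ofReal_mul (by positivity), e]
  congr 1
  field_simp

lemma F_energy (p s : ℝ) (hp : 2 < p) (hs0 : 0 < s) (hs1 : s < 1) (hps : 1 - 2 / p < s) :
    ∃ C : ENNReal, C ≠ ⊤ ∧ ∀ f : ℂ → ℂ, HolOn f → ∀ a : ℂ, ‖a‖ < 1 →
    ENNReal.ofReal ((1 - ‖a‖ ^ 2) ^ s) * ∫⁻ u in ball (0:ℂ) 1, ENNReal.ofReal (‖deriv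
      (fun z => (f z - f a) * (1 - (starRingEnd ℂ) a * z) ^ (-(s:ℂ))) u‖ ^ 2 * (1 - ‖u‖ ^ 2) ^ s) ≤
      C * NS p f ^ (2 / p) := by
  obtain ⟨A, hA, hA'⟩ := intA p s hp hps
  obtain ⟨B, hB, hB'⟩ := intB p s hp hs0 hs1
  refine ⟨2 * (A + B), ENNReal.mul_ne_top (by norm_num) (ENNReal.add_ne_top.2 ⟨hA, hB⟩), ?_⟩
  intro f hf a ha
  have hm := measurable_deriv f
  have hphi : Measurable (phi a) := by unfold phi; fun_prop
  rw [← lintegral_const_mul' _ _ ENNReal.ofReal_ne_top]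
  calc _ ≤ ∫⁻ u in ball (0:ℂ) 1, 2 * (ENNReal.ofReal (‖deriv f u‖ ^ 2 * (1 - ‖phi a u‖ ^ 2) ^ s) +
        ENNReal.ofReal (‖f u - f a‖ ^ 2 * ((1 - ‖phi a u‖ ^ 2) ^ s /
          ‖1 - (starRingEnd ℂ) a * u‖ ^ 2))) := by
        apply setLIntegral_mono' measurableSet_ball
        intro u hu
        rw [mem_ball_zero_iff] at hu
        obtain ⟨h1, h2, h3, h4, h5⟩ := one_sub_sq_bounds (norm_nonneg a) ha
        obtain ⟨h1', h2', h3', h4', h5'⟩ := one_sub_sq_bounds (norm_nonneg u) hu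
        obtain ⟨d1, d2, d3, d4⟩ := den_lower ha hu
        have hq : 0 < 1 - ‖phi a u‖ ^ 2 := by
          have := phi_lt ha hu; nlinarith [norm_nonneg (phi a u)]
        rw [show (2:ENNReal) = ENNReal.ofReal 2 by simp, ← ENNReal.ofReal_add (by positivity) (by positivity),
          ← ENNReal.ofReal_mul (by positivity), ← ENNReal.ofReal_mul (by positivity)]
        apply ENNReal.ofReal_le_ofReal
        rw [w_expand ha hu, (cpow_facts ha s hf u hu).2.deriv]
        set d := ‖1 - (starRingEnd ℂ) a * u‖ with hd
        have hnorm : ‖deriv f u * (1 - (starRingEnd ℂ) a * u) ^ (-(s:ℂ)) + (f u - f a) *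
          ((-(s:ℂ)) * (1 - (starRingEnd ℂ) a * u) ^ (-(s:ℂ) - 1) * (-(starRingEnd ℂ) a))‖ ≤
            ‖deriv f u‖ * d ^ (-s) + ‖f u - f a‖ * (d ^ (-s) / d) := by
          refine (norm_add_le _ _).trans ?_
          rw [norm_mul, norm_mul, norm_mul, norm_mul, norm_neg, norm_neg, RCLike.norm_conj,
            show (-(s:ℂ) - 1) = ((-s - 1 : ℝ) : ℂ) by push_cast; ring,
            ← Complex.ofReal_neg, Complex.norm_cpow_real, Complex.norm_cpow_real, Complex.norm_real,
            Real.norm_of_nonneg hs0.le, ← hd, Real.rpow_sub_one d3.ne']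
          gcongr
          calc s * (d ^ (-s) / d) * ‖a‖ ≤ 1 * (d ^ (-s) / d) * 1 := by gcongr
            _ = _ := by ring
        have hsq : ‖deriv f u * (1 - (starRingEnd ℂ) a * u) ^ (-(s:ℂ)) + (f u - f a) *
          ((-(s:ℂ)) * (1 - (starRingEnd ℂ) a * u) ^ (-(s:ℂ) - 1) * (-(starRingEnd ℂ) a))‖ ^ 2 ≤
            2 * ((‖deriv f u‖ * d ^ (-s)) ^ 2 + (‖f u - f a‖ * (d ^ (-s) / d)) ^ 2) := by
          refine (pow_le_pow_left₀ (norm_nonneg _) hnorm 2).trans ?_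
          exact add_sq_le
        calc _ ≤ (1 - ‖a‖ ^ 2) ^ s * ((2 * ((‖deriv f u‖ * d ^ (-s)) ^ 2 +
              (‖f u - f a‖ * (d ^ (-s) / d)) ^ 2)) * (1 - ‖u‖ ^ 2) ^ s) := by gcongr
          _ = _ := by ring
    _ = 2 * (IQ s f a + ∫⁻ u in ball (0:ℂ) 1, ENNReal.ofReal (‖f u - f a‖ ^ 2 *
          ((1 - ‖phi a u‖ ^ 2) ^ s / ‖1 - (starRingEnd ℂ) a * u‖ ^ 2))) := by
        rw [lintegral_const_mul' _ _ (by norm_num), lintegral_add_left (by fun_prop), IQ]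
    _ ≤ 2 * (A * NS p f ^ (2 / p) + B * NS p f ^ (2 / p)) := by
        rw [cv1 ha hf, cv2 ha f]
        have h1 := hA' (fun w => f (phi a w))
        have h2 := hB' (fun w => f (phi a w)) (comp_phi_hol ha hf) a ha
        rw [NS_comp p hp ha hf] at h1 h2
        gcongr
    _ = _ := by ring

lemma sq_le_aux (x y : ℂ) : ENNReal.ofReal (‖x‖ ^ 2) ≤
    2 * (ENNReal.ofReal (‖y‖ ^ 2) + ENNReal.ofReal (‖x - y‖ ^ 2)) := by
  rw [show (2:ENNReal) = ENNReal.ofReal 2 by simp, ← ENNReal.ofReal_add (by positivity) (by positivity),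
    ← ENNReal.ofReal_mul (by positivity)]
  apply ENNReal.ofReal_le_ofReal
  have : ‖x‖ ≤ ‖y‖ + ‖x - y‖ := by
    have := norm_add_le y (x - y); simpa using this
  exact (pow_le_pow_left₀ (norm_nonneg _) this 2).trans add_sq_le

lemma suff (p s : ℝ) (hp : 2 < p) (hs0 : 0 < s) (hs1 : s < 1) (hps : 1 - 2 / p < s)
    (g : ℂ → ℂ) (M : ENNReal) (hM0 : M ≠ ⊤)
    (hM : ∀ a : ℂ, ‖a‖ < 1 →
      ENNReal.ofReal (Real.log (2 / (1 - ‖a‖)) ^ (2 - 2 / p)) * IQ s g a ≤ M)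
    (f : ℂ → ℂ) (hf : HolOn f) (hN : NS p f ≠ ⊤) :
    ∃ K : ENNReal, K ≠ ⊤ ∧ ∀ a : ℂ, ‖a‖ < 1 →
      ∫⁻ z in ball (0:ℂ) 1, ENNReal.ofReal (‖f z‖ ^ 2) *
        ENNReal.ofReal (‖deriv g z‖ ^ 2 * (1 - ‖phi a z‖ ^ 2) ^ s) ≤ K := by
  have hp0 : 0 < p := by linarith
  have hκ : 1 < 2 - 2 / p := by
    have : 2 / p < 1 := by rw [div_lt_iff₀ hp0]; linarith
    linarith
  have hκ2 : 2 - 2 / p ≤ 2 := by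
    have : 0 < 2 / p := by positivity
    linarith
  set κ := 2 - 2 / p with hκdef
  set n := NS p f ^ (2 / p) with hn
  have hn0 : n ≠ ⊤ := ENNReal.rpow_ne_top_of_nonneg (by positivity) hN
  obtain ⟨C1, hC1, hgr⟩ := growth2 p hp
  obtain ⟨C2, hC2, hcar⟩ := carleson κ s hκ hs0
  obtain ⟨C3, hC3, hFe⟩ := F_energy p s hp hs0 hs1 hps
  obtain ⟨C4, hC4, hlog⟩ := log_pow_le κ s (by linarith) hs0
  have hIQ : ∀ a : ℂ, ‖a‖ < 1 → IQ s g a ≤ 4 * M := by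
    intro a ha
    calc IQ s g a = 1 * IQ s g a := (one_mul _).symm
      _ ≤ (4 * ENNReal.ofReal (Real.log (2 / (1 - ‖a‖)) ^ κ)) * IQ s g a := by
        gcongr
        rw [show (4:ENNReal) = ENNReal.ofReal 4 by simp, ← ENNReal.ofReal_mul (by norm_num),
          ← ENNReal.ofReal_one]
        apply ENNReal.ofReal_le_ofReal
        have h1 : ((1:ℝ)/2) ^ κ ≤ Real.log (2 / (1 - ‖a‖)) ^ κ :=
          Real.rpow_le_rpow (by norm_num) (ell_half (norm_nonneg a) ha).le (by linarith)
        have h2 : ((1:ℝ)/2) ^ (2:ℝ) ≤ ((1:ℝ)/2) ^ κ :=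
          Real.rpow_le_rpow_of_exponent_ge (by norm_num) (by norm_num) hκ2
        rw [Real.rpow_two] at h2
        linarith
      _ ≤ _ := by rw [mul_assoc]; gcongr; exact hM a ha
  have hm := measurable_deriv g
  refine ⟨2 * (2 * (ENNReal.ofReal (‖f 0‖ ^ 2) * (4 * M) + C1 * n * M) +
    2 * (C1 * n * ENNReal.ofReal (2 ^ s * C4) * (4 * M) + C2 * (M * (C3 * n)))), ?_, ?_⟩
  · have hmul := @ENNReal.mul_ne_top
    refine hmul (by norm_num) (ENNReal.add_ne_top.2 ⟨hmul (by norm_num) (ENNReal.add_ne_top.2 ⟨?_, ?_⟩),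
      hmul (by norm_num) (ENNReal.add_ne_top.2 ⟨?_, ?_⟩)⟩)
    · exact hmul ENNReal.ofReal_ne_top (hmul (by norm_num) hM0)
    · exact hmul (hmul hC1 hn0) hM0
    · exact hmul (hmul (hmul hC1 hn0) ENNReal.ofReal_ne_top) (hmul (by norm_num) hM0)
    · exact hmul hC2 (hmul hM0 (hmul hC3 hn0))
  intro a ha
  obtain ⟨h1, h2, h3, h4, h5⟩ := one_sub_sq_bounds (norm_nonneg a) ha
  have hphi : Measurable (phi a) := by unfold phi; fun_prop
  have hl : 0 < Real.log (2 / (1 - ‖a‖)) := by linarith [ell_half (norm_nonneg a) ha]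
  set F := (fun z => (f z - f a) * (1 - (starRingEnd ℂ) a * z) ^ (-(s:ℂ))) with hF
  have hFhol : HolOn F := fun z hz =>
    (cpow_facts ha s hf z (mem_ball_zero_iff.1 hz)).2.differentiableAt.differentiableWithinAt
  calc _ ≤ ∫⁻ z in ball (0:ℂ) 1, 2 * (ENNReal.ofReal (‖f a‖ ^ 2) *
          ENNReal.ofReal (‖deriv g z‖ ^ 2 * (1 - ‖phi a z‖ ^ 2) ^ s) +
        ENNReal.ofReal (‖f z - f a‖ ^ 2) *
          ENNReal.ofReal (‖deriv g z‖ ^ 2 * (1 - ‖phi a z‖ ^ 2) ^ s)) := by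
        apply setLIntegral_mono' measurableSet_ball
        intro z hz
        rw [← add_mul, ← mul_assoc]
        gcongr
        exact sq_le_aux _ _
    _ = 2 * (ENNReal.ofReal (‖f a‖ ^ 2) * IQ s g a + ∫⁻ z in ball (0:ℂ) 1,
          ENNReal.ofReal (‖f z - f a‖ ^ 2) *
          ENNReal.ofReal (‖deriv g z‖ ^ 2 * (1 - ‖phi a z‖ ^ 2) ^ s)) := by
        rw [lintegral_const_mul' _ _ (by norm_num), lintegral_add_left (by fun_prop),
          lintegral_const_mul' _ _ ENNReal.ofReal_ne_top, IQ]
    _ ≤ _ := by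
        refine mul_le_mul_right (add_le_add ?_ ?_) _
        · calc _ ≤ 2 * (ENNReal.ofReal (‖f 0‖ ^ 2) + C1 * n *
                ENNReal.ofReal (Real.log (2 / (1 - ‖a‖)) ^ κ)) * IQ s g a := by
                gcongr
                refine (sq_le_aux (f a) (f 0)).trans ?_
                gcongr
                exact hgr f hf a ha
            _ = 2 * (ENNReal.ofReal (‖f 0‖ ^ 2) * IQ s g a + C1 * n *
                (ENNReal.ofReal (Real.log (2 / (1 - ‖a‖)) ^ κ) * IQ s g a)) := by ring
            _ ≤ _ := by
                gcongr
                · exact hIQ a ha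
                · exact hM a ha
        · calc _ ≤ ∫⁻ z in ball (0:ℂ) 1, 2 * ((ENNReal.ofReal (‖F 0‖ ^ 2) * ENNReal.ofReal ((1 - ‖a‖ ^ 2) ^ s)) *
                    ENNReal.ofReal (‖deriv g z‖ ^ 2 * (1 - ‖z‖ ^ 2) ^ s) +
                  ENNReal.ofReal ((1 - ‖a‖ ^ 2) ^ s) * (ENNReal.ofReal (‖F z - F 0‖ ^ 2) *
                    ENNReal.ofReal (‖deriv g z‖ ^ 2 * (1 - ‖z‖ ^ 2) ^ s))) := by
                apply setLIntegral_mono' measurableSet_ball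
                intro z hz
                rw [mem_ball_zero_iff] at hz
                obtain ⟨h1', h2', h3', h4', h5'⟩ := one_sub_sq_bounds (norm_nonneg z) hz
                calc _ = ENNReal.ofReal (‖F z‖ ^ 2) * (ENNReal.ofReal ((1 - ‖a‖ ^ 2) ^ s) *
                      ENNReal.ofReal (‖deriv g z‖ ^ 2 * (1 - ‖z‖ ^ 2) ^ s)) := by
                      rw [w_expand ha hz, hF]
                      simp only
                      rw [(cpow_facts ha s hf z hz).1, ← ENNReal.ofReal_mul (by positivity),
                        ← ENNReal.ofReal_mul (by positivity), ← ENNReal.ofReal_mul (by positivity)]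
                      congr 1; ring
                  _ ≤ 2 * (ENNReal.ofReal (‖F 0‖ ^ 2) + ENNReal.ofReal (‖F z - F 0‖ ^ 2)) *
                      (ENNReal.ofReal ((1 - ‖a‖ ^ 2) ^ s) *
                      ENNReal.ofReal (‖deriv g z‖ ^ 2 * (1 - ‖z‖ ^ 2) ^ s)) := by
                      gcongr; exact sq_le_aux _ _
                  _ = _ := by ring
            _ = 2 * ((ENNReal.ofReal (‖F 0‖ ^ 2) * ENNReal.ofReal ((1 - ‖a‖ ^ 2) ^ s)) * IQ s g 0 +
                  ENNReal.ofReal ((1 - ‖a‖ ^ 2) ^ s) * ∫⁻ z in ball (0:ℂ) 1, (ENNReal.ofReal (‖F z - F 0‖ ^ 2) *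
                    ENNReal.ofReal (‖deriv g z‖ ^ 2 * (1 - ‖z‖ ^ 2) ^ s))) := by
                have e0 : IQ s g 0 = ∫⁻ z in ball (0:ℂ) 1, ENNReal.ofReal (‖deriv g z‖ ^ 2 * (1 - ‖z‖ ^ 2) ^ s) := by
                  simp [IQ, phi]
                rw [lintegral_const_mul' _ _ (by norm_num), lintegral_add_left (by fun_prop),
                  lintegral_const_mul' _ _ (ENNReal.mul_ne_top ENNReal.ofReal_ne_top ENNReal.ofReal_ne_top),
                  lintegral_const_mul' _ _ ENNReal.ofReal_ne_top, e0]
            _ ≤ _ := by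
                refine mul_le_mul_right (add_le_add (mul_le_mul' ?_ (hIQ 0 (by simp))) ?_) _
                · have e1 : ‖F 0‖ = ‖f a - f 0‖ := by
                    simp [hF, norm_sub_rev]
                  rw [e1]
                  calc _ ≤ C1 * n * ENNReal.ofReal (Real.log (2 / (1 - ‖a‖)) ^ κ) *
                        ENNReal.ofReal ((1 - ‖a‖ ^ 2) ^ s) := by
                        gcongr; exact hgr f hf a ha
                    _ ≤ _ := by
                        rw [mul_assoc, ← ENNReal.ofReal_mul (by positivity)]
                        refine mul_le_mul_right (ENNReal.ofReal_le_ofReal ?_) _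
                        calc _ ≤ (C4 * (1 - ‖a‖) ^ (-s)) * (2 * (1 - ‖a‖)) ^ s := by
                              gcongr
                              exact hlog _ h1 (by linarith [norm_nonneg a])
                          _ = _ := by
                              rw [Real.mul_rpow (by norm_num) h1.le, Real.rpow_neg h1.le]
                              field_simp
                · calc _ ≤ ENNReal.ofReal ((1 - ‖a‖ ^ 2) ^ s) * (C2 * (M * ∫⁻ u in ball (0:ℂ) 1,
                        ENNReal.ofReal (‖deriv F u‖ ^ 2 * (1 - ‖u‖ ^ 2) ^ s))) :=
                        mul_le_mul_right (hcar g M hM F hFhol) _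
                    _ = C2 * (M * (ENNReal.ofReal ((1 - ‖a‖ ^ 2) ^ s) * ∫⁻ u in ball (0:ℂ) 1,
                        ENNReal.ofReal (‖deriv F u‖ ^ 2 * (1 - ‖u‖ ^ 2) ^ s))) := by ring
                    _ ≤ _ := by
                        exact mul_le_mul_right (mul_le_mul_right (hFe f hf a ha) _) _

/-- logarithmic test function -/
noncomputable def LL (a z : ℂ) : ℂ := (Real.log 2 : ℂ) - Complex.log (1 - (starRingEnd ℂ) a * z)

/-- normalisation of the test function -/
noncomputable def cc (p : ℝ) (a : ℂ) : ℝ := Real.log (2 / (1 - ‖a‖)) ^ (-(1 / p))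

lemma LL_deriv {a z : ℂ} (ha : ‖a‖ < 1) (hz : ‖z‖ < 1) :
    HasDerivAt (LL a) ((starRingEnd ℂ) a / (1 - (starRingEnd ℂ) a * z)) z := by
  have hsl : 1 - (starRingEnd ℂ) a * z ∈ slitPlane := by
    left
    have : ((starRingEnd ℂ) a * z).re ≤ ‖(starRingEnd ℂ) a * z‖ := Complex.re_le_norm _
    rw [norm_mul, RCLike.norm_conj] at this
    simp only [sub_re, one_re]
    nlinarith [norm_nonneg a, norm_nonneg z]
  have h2 : HasDerivAt (fun z : ℂ => 1 - (starRingEnd ℂ) a * z) (-((starRingEnd ℂ) a)) z := by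
    simpa using ((hasDerivAt_id z).const_mul ((starRingEnd ℂ) a)).const_sub 1
  have h3 : HasDerivAt (LL a) _ z := (h2.clog hsl).const_sub (Real.log 2 : ℂ)
  refine h3.congr_deriv ?_
  ring

lemma LL_re {a z : ℂ} (ha : ‖a‖ < 1) (hz : ‖z‖ < 1) :
    (LL a z).re = Real.log (2 / ‖1 - (starRingEnd ℂ) a * z‖) ∧
      0 ≤ Real.log (2 / ‖1 - (starRingEnd ℂ) a * z‖) := by
  obtain ⟨d1, d2, d3, d4⟩ := den_lower ha hz
  constructor
  · rw [LL, sub_re, ofReal_re, Complex.log_re, Real.log_div (by norm_num) d3.ne']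
  · apply Real.log_nonneg
    rw [le_div_iff₀ d3]; linarith

lemma LL_bound {a z : ℂ} (ha : ‖a‖ < 1) {r : ℝ} (hr : r < 1) (hz : ‖z‖ < r) :
    ‖LL a z‖ ≤ Real.log 2 + ((1 - r)⁻¹ / 2 + 1) := by
  rw [LL]
  refine (norm_sub_le _ _).trans ?_
  have hl : 0 < Real.log 2 := Real.log_pos (by norm_num)
  rw [Complex.norm_real, Real.norm_of_nonneg hl.le]
  have hn : ‖-((starRingEnd ℂ) a * z)‖ ≤ ‖z‖ := by
    rw [norm_neg, norm_mul, RCLike.norm_conj]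
    nlinarith [norm_nonneg z]
  have h := Complex.norm_log_one_add_le (z := -((starRingEnd ℂ) a * z)) (by linarith)
  rw [← sub_eq_add_neg] at h
  gcongr
  refine h.trans ?_
  set x := ‖-((starRingEnd ℂ) a * z)‖ with hx
  have hx0 : 0 ≤ x := norm_nonneg _
  have : (1 - x)⁻¹ ≤ (1 - r)⁻¹ := by
    apply inv_anti₀ <;> linarith
  have h0 : 0 < (1 - r)⁻¹ := by apply inv_pos.2; linarith
  have : x ^ 2 * (1 - x)⁻¹ ≤ 1 * (1 - r)⁻¹ := by
    have hx1 : 0 ≤ (1 - x)⁻¹ := inv_nonneg.2 (by linarith)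
    exact mul_le_mul (by nlinarith) this hx1 zero_le_one
  linarith

lemma cc_pos (p : ℝ) {a : ℂ} (ha : ‖a‖ < 1) : 0 < cc p a := by
  have := ell_half (norm_nonneg a) ha
  unfold cc; positivity

lemma cc_le {p : ℝ} (hp : 2 < p) {a : ℂ} (ha : ‖a‖ < 1) : cc p a ≤ 2 := by
  have h := ell_half (norm_nonneg a) ha
  have hp1 : 1 / p ≤ 1 := by rw [div_le_one (by linarith)]; linarith
  have hp0 : 0 < 1 / p := by apply div_pos <;> linarith
  calc cc p a ≤ (1/2:ℝ) ^ (-(1 / p)) := Real.rpow_le_rpow_of_nonpos (by norm_num) h.le (by linarith)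
    _ ≤ (1/2:ℝ) ^ (-1:ℝ) := Real.rpow_le_rpow_of_exponent_ge (by norm_num) (by norm_num) (by linarith)
    _ = 2 := by rw [Real.rpow_neg_one]; norm_num

lemma jensen_tsum {p : ℝ} (hp : 1 ≤ p) (w x : ℕ → ENNReal) (hw : ∑' k, w k ≤ 1) :
    (∑' k, w k * x k) ^ p ≤ ∑' k, w k * x k ^ p := by
  have hp0 : 0 < p := by linarith
  have h : ∑' k, w k * x k ≤ (∑' k, w k * x k ^ p) ^ p⁻¹ := by
    rw [ENNReal.tsum_eq_iSup_sum]
    refine iSup_le fun S => ?_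
    refine (ENNReal.inner_le_weight_mul_Lp_of_nonneg S hp w x).trans ?_
    calc _ ≤ 1 * (∑' k, w k * x k ^ p) ^ p⁻¹ := by
          gcongr
          · apply ENNReal.rpow_le_one ((ENNReal.sum_le_tsum S).trans hw)
            have := inv_le_one_of_one_le₀ hp
            linarith
          · exact ENNReal.sum_le_tsum S
      _ = _ := one_mul _
  calc _ ≤ ((∑' k, w k * x k ^ p) ^ p⁻¹) ^ p := ENNReal.rpow_le_rpow h hp0.le
    _ = _ := by rw [← ENNReal.rpow_mul, inv_mul_cancel₀ hp0.ne', ENNReal.rpow_one]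

lemma tsum_half : ∑' k : ℕ, ENNReal.ofReal ((1/2:ℝ) ^ (k + 1)) = 1 := by
  rw [← ENNReal.ofReal_tsum_of_nonneg (fun k => by positivity)]
  · simp only [pow_succ]
    rw [tsum_mul_right, tsum_geometric_two]
    norm_num
  · simp only [pow_succ]
    exact summable_geometric_two.mul_right _

lemma test_sum (p : ℝ) (hp : 2 < p) (a : ℕ → ℂ) (ha : ∀ k, ‖a k‖ < 1) :
    ∃ f : ℂ → ℂ, HolOn f ∧ NB p f < ⊤ ∧ ∀ k : ℕ, ∀ z : ℂ, ‖z‖ < 1 →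
      (1/2:ℝ) ^ (k + 1) * (cc p (a k) * Real.log (2 / ‖1 - (starRingEnd ℂ) (a k) * z‖)) ≤ ‖f z‖ := by
  have hp0 : 0 < p := by linarith
  set Fk : ℕ → ℂ → ℂ := fun k z => (((1/2:ℝ) ^ (k + 1) * cc p (a k) : ℝ) : ℂ) * LL (a k) z with hFk
  have hdk : ∀ k z, ‖z‖ < 1 → HasDerivAt (Fk k) ((((1/2:ℝ) ^ (k + 1) * cc p (a k) : ℝ) : ℂ) *
      ((starRingEnd ℂ) (a k) / (1 - (starRingEnd ℂ) (a k) * z))) z :=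
    fun k z hz => (LL_deriv (ha k) hz).const_mul _
  have hb : ∀ r : ℝ, r < 1 → ∀ k : ℕ, ∀ z ∈ ball (0:ℂ) r,
      ‖Fk k z‖ ≤ (1/2:ℝ) ^ k * ((1/2) * (2 * (Real.log 2 + ((1 - r)⁻¹ / 2 + 1)))) := by
    intro r hr k z hz
    rw [mem_ball_zero_iff] at hz
    have h1 := LL_bound (ha k) hr hz
    have h2 := cc_pos p (ha k)
    rw [hFk]; simp only
    rw [norm_mul, Complex.norm_real, Real.norm_of_nonneg (by positivity), ← mul_assoc, ← pow_succ,
      mul_assoc]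
    gcongr
    exact cc_le hp (ha k)
  have hsum : ∀ r : ℝ, Summable fun k : ℕ =>
      (1/2:ℝ) ^ k * ((1/2) * (2 * (Real.log 2 + ((1 - r)⁻¹ / 2 + 1)))) :=
    fun r => summable_geometric_two.mul_right _
  have hdiff : ∀ r : ℝ, r < 1 → ∀ k, DifferentiableOn ℂ (Fk k) (ball (0:ℂ) r) := by
    intro r hr k z hz
    rw [mem_ball_zero_iff] at hz
    exact (hdk k z (hz.trans hr)).differentiableAt.differentiableWithinAt
  have hr : ∀ z : ℂ, ‖z‖ < 1 → ∃ r : ℝ, r < 1 ∧ z ∈ ball (0:ℂ) r := by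
    intro z hz
    obtain ⟨r, h1, h2⟩ := exists_between hz
    exact ⟨r, h2, mem_ball_zero_iff.2 h1⟩
  refine ⟨fun z => ∑' k, Fk k z, ?_, ?_, ?_⟩
  · intro z hz
    obtain ⟨r, hr1, hzr⟩ := hr z (mem_ball_zero_iff.1 hz)
    exact ((differentiableOn_tsum_of_summable_norm (hsum r) (hdiff r hr1) isOpen_ball
      (hb r hr1)).differentiableAt (isOpen_ball.mem_nhds hzr)).differentiableWithinAt
  · have hpt : ∀ z ∈ ball (0:ℂ) 1, ENNReal.ofReal ((1 - ‖z‖) ^ (p - 2) *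
        ‖deriv (fun z => ∑' k, Fk k z) z‖ ^ p) ≤ ∑' k : ℕ, ENNReal.ofReal ((1/2:ℝ) ^ (k + 1)) *
          ENNReal.ofReal (cc p (a k) ^ p * ‖1 - (starRingEnd ℂ) (a k) * z‖ ^ (-2:ℝ)) := by
      intro z hz
      rw [mem_ball_zero_iff] at hz
      obtain ⟨r, hr1, hzr⟩ := hr z hz
      have hs := hasSum_deriv_of_summable_norm (hsum r) (hdiff r hr1) isOpen_ball (hb r hr1) hzr
      have h1 : 0 < 1 - ‖z‖ := by linarith
      have hle : ENNReal.ofReal ‖deriv (fun z => ∑' k, Fk k z) z‖ ≤ ∑' k : ℕ,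
          ENNReal.ofReal ((1/2:ℝ) ^ (k + 1)) *
          ENNReal.ofReal (cc p (a k) / ‖1 - (starRingEnd ℂ) (a k) * z‖) := by
        rw [← hs.tsum_eq, ofReal_norm]
        refine enorm_tsum_le_tsum_enorm.trans (ENNReal.tsum_le_tsum fun k => ?_)
        have hcp := cc_pos p (ha k)
        rw [(hdk k z hz).deriv, ← ofReal_norm, norm_mul, norm_div, RCLike.norm_conj, Complex.norm_real,
          Real.norm_of_nonneg (by positivity), ← ENNReal.ofReal_mul (by positivity)]
        apply ENNReal.ofReal_le_ofReal
        rw [mul_assoc]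
        gcongr
        rw [← mul_div_assoc]
        gcongr
        have := ha k
        nlinarith
      rw [ENNReal.ofReal_mul (by positivity), ← ENNReal.ofReal_rpow_of_nonneg (norm_nonneg _) hp0.le]
      calc _ ≤ ENNReal.ofReal ((1 - ‖z‖) ^ (p - 2)) * ∑' k : ℕ, ENNReal.ofReal ((1/2:ℝ) ^ (k + 1)) *
          ENNReal.ofReal (cc p (a k) / ‖1 - (starRingEnd ℂ) (a k) * z‖) ^ p := by
            refine mul_le_mul_right ?_ _
            exact (ENNReal.rpow_le_rpow hle hp0.le).trans (jensen_tsum (by linarith) _ _ tsum_half.le)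
        _ ≤ _ := by
            rw [← ENNReal.tsum_mul_left]
            refine ENNReal.tsum_le_tsum fun k => ?_
            have hcp := cc_pos p (ha k)
            obtain ⟨d1, d2, d3, d4⟩ := den_lower (ha k) hz
            rw [mul_left_comm]
            gcongr
            rw [ENNReal.ofReal_rpow_of_nonneg (by positivity) hp0.le, ← ENNReal.ofReal_mul (by positivity)]
            apply ENNReal.ofReal_le_ofReal
            rw [Real.div_rpow hcp.le d3.le]
            calc _ ≤ ‖1 - (starRingEnd ℂ) (a k) * z‖ ^ (p - 2) *
                  (cc p (a k) ^ p / ‖1 - (starRingEnd ℂ) (a k) * z‖ ^ p) := by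
                  gcongr
              _ = _ := by
                  have e : ‖1 - (starRingEnd ℂ) (a k) * z‖ ^ (-2:ℝ) =
                      ‖1 - (starRingEnd ℂ) (a k) * z‖ ^ (p - 2) / ‖1 - (starRingEnd ℂ) (a k) * z‖ ^ p := by
                    rw [← Real.rpow_sub d3]; congr 1; ring
                  rw [e, mul_div_assoc', mul_div_assoc', mul_comm]
    calc NB p (fun z => ∑' k, Fk k z) ≤ ∫⁻ z in ball (0:ℂ) 1, ∑' k : ℕ, ENNReal.ofReal ((1/2:ℝ) ^ (k + 1)) *
          ENNReal.ofReal (cc p (a k) ^ p * ‖1 - (starRingEnd ℂ) (a k) * z‖ ^ (-2:ℝ)) :=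
          setLIntegral_mono' measurableSet_ball hpt
      _ = ∑' k : ℕ, ∫⁻ z in ball (0:ℂ) 1, ENNReal.ofReal ((1/2:ℝ) ^ (k + 1)) *
          ENNReal.ofReal (cc p (a k) ^ p * ‖1 - (starRingEnd ℂ) (a k) * z‖ ^ (-2:ℝ)) := by
          rw [lintegral_tsum]
          intro k
          apply Measurable.aemeasurable
          fun_prop
      _ ≤ ∑' k : ℕ, ENNReal.ofReal ((1/2:ℝ) ^ (k + 1)) * ENNReal.ofReal (144 * π) := by
          refine ENNReal.tsum_le_tsum fun k => ?_
          rw [lintegral_const_mul' _ _ ENNReal.ofReal_ne_top]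
          refine mul_le_mul_right ?_ _
          have hcp := cc_pos p (ha k)
          have hl := ell_half (norm_nonneg (a k)) (ha k)
          simp only [ENNReal.ofReal_mul (show 0 ≤ cc p (a k) ^ p by positivity)]
          rw [lintegral_const_mul' _ _ ENNReal.ofReal_ne_top]
          refine (mul_le_mul_right (den_int_log (a k) (ha k)) _).trans ?_
          rw [← ENNReal.ofReal_mul (by positivity)]
          apply ENNReal.ofReal_le_ofReal
          apply le_of_eq
          rw [cc, ← Real.rpow_mul (by linarith), neg_mul, one_div_mul_cancel hp0.ne', Real.rpow_neg_one]
          field_simp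
      _ < ⊤ := by
          rw [ENNReal.tsum_mul_right, tsum_half, one_mul]
          exact ENNReal.ofReal_lt_top
  · intro k z hz
    obtain ⟨r, hr1, hzr⟩ := hr z hz
    have hS : Summable fun k => Fk k z :=
      Summable.of_norm_bounded (hsum r) (fun k => hb r hr1 k z hzr)
    have hre := Complex.hasSum_re hS.hasSum
    have e : ∀ k, (Fk k z).re = (1/2:ℝ) ^ (k + 1) *
        (cc p (a k) * Real.log (2 / ‖1 - (starRingEnd ℂ) (a k) * z‖)) := by
      intro k
      rw [hFk]; simp only
      rw [Complex.re_ofReal_mul, (LL_re (ha k) hz).1, mul_assoc]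
    rw [← e k]
    refine (le_hasSum hre k ?_).trans (Complex.re_le_norm _)
    intro j _
    rw [e j]
    have := cc_pos p (ha j)
    have := (LL_re (ha j) hz).2
    positivity

lemma pointwise_test (p s : ℝ) (hp : 2 < p) (hs0 : 0 < s) : ∃ C : ℝ, 0 < C ∧
    ∀ a z : ℂ, ‖a‖ < 1 → ‖z‖ < 1 →
    Real.log (2 / (1 - ‖a‖)) ^ (2 - 2 / p) * (1 - ‖phi a z‖ ^ 2) ^ s ≤
      16 * (cc p a * Real.log (2 / ‖1 - (starRingEnd ℂ) a * z‖)) ^ 2 * (1 - ‖phi a z‖ ^ 2) ^ s +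
      C * (1 - ‖z‖ ^ 2) ^ s := by
  have hp0 : 0 < p := by linarith
  have hκ : 0 < 2 - 2 / p := by
    have : 2 / p < 2 := by rw [div_lt_iff₀ hp0]; linarith
    linarith
  obtain ⟨C, hC, hlog⟩ := log_pow_le (2 - 2 / p) (s / 2) hκ (by positivity)
  refine ⟨C, hC, ?_⟩
  intro a z ha hz
  obtain ⟨h1, h2, h3, h4, h5⟩ := one_sub_sq_bounds (norm_nonneg a) ha
  obtain ⟨h1', h2', h3', h4', h5'⟩ := one_sub_sq_bounds (norm_nonneg z) hz
  obtain ⟨d1, d2, d3, d4⟩ := den_lower ha hz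
  have hl := ell_half (norm_nonneg a) ha
  have hq : 0 < 1 - ‖phi a z‖ ^ 2 := by
    have := phi_lt ha hz; nlinarith [norm_nonneg (phi a z)]
  have hL := (LL_re ha hz).2
  have hcc := cc_pos p ha
  set l := Real.log (2 / (1 - ‖a‖)) with hldef
  set d := ‖1 - (starRingEnd ℂ) a * z‖ with hd
  have hl0 : 0 < l := by linarith
  by_cases h : l / 4 ≤ Real.log (2 / d)
  · have e : l ^ (2 - 2 / p) = 16 * (cc p a * (l / 4)) ^ 2 := by
      have : cc p a ^ 2 = l ^ (-(2 / p)) := by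
        rw [cc, ← hldef, ← Real.rpow_natCast, ← Real.rpow_mul hl0.le]
        congr 1; push_cast; ring
      rw [mul_pow, this, sub_eq_add_neg, Real.rpow_add hl0, Real.rpow_two]; ring
    rw [e]
    have : 0 ≤ C * (1 - ‖z‖ ^ 2) ^ s := by positivity
    refine le_trans ?_ (le_add_of_nonneg_right this)
    gcongr
  · push Not at h
    have hx : 0 < 2 / (1 - ‖a‖) := by positivity
    have hlt : 2 / d < (2 / (1 - ‖a‖)) ^ (1/4:ℝ) := by
      rw [← Real.log_lt_log_iff (by positivity) (by positivity), Real.log_rpow hx, ← hldef]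
      linarith
    have hsq : 2 * (1 - ‖a‖) / d ^ 2 ≤ ((1 - ‖a‖) / 2) ^ (1/2:ℝ) := by
      have h6 : (2 / d) ^ 2 ≤ (2 / (1 - ‖a‖)) ^ (1/2:ℝ) := by
        have := pow_le_pow_left₀ (by positivity) hlt.le 2
        rwa [← Real.rpow_natCast ((2 / (1 - ‖a‖)) ^ (1/4:ℝ)), ← Real.rpow_mul hx.le,
          show (1/4:ℝ) * ((2:ℕ):ℝ) = 1/2 by norm_num] at this
      have e2 : ((1 - ‖a‖) / 2) * (2 / (1 - ‖a‖)) ^ (1/2:ℝ) = ((1 - ‖a‖) / 2) ^ (1/2:ℝ) := by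
        have hy : 0 < (1 - ‖a‖) / 2 := by positivity
        rw [show 2 / (1 - ‖a‖) = ((1 - ‖a‖) / 2)⁻¹ by rw [inv_div], Real.inv_rpow hy.le,
          ← Real.rpow_neg hy.le]
        nth_rewrite 1 [← Real.rpow_one ((1 - ‖a‖) / 2)]
        rw [← Real.rpow_add hy]; norm_num
      rw [← e2]
      calc _ = ((1 - ‖a‖) / 2) * (2 / d) ^ 2 := by field_simp
        _ ≤ _ := by gcongr
    have hw : (1 - ‖phi a z‖ ^ 2) ^ s ≤ (1 - ‖a‖) ^ (s / 2) * (1 - ‖z‖ ^ 2) ^ s := by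
      have h7 : 1 - ‖phi a z‖ ^ 2 ≤ (1 - ‖a‖) ^ (1/2:ℝ) * (1 - ‖z‖ ^ 2) := by
        rw [one_sub_phi ha hz, ← hd]
        calc _ = ((1 - ‖a‖ ^ 2) / d ^ 2) * (1 - ‖z‖ ^ 2) := by ring
          _ ≤ (2 * (1 - ‖a‖) / d ^ 2) * (1 - ‖z‖ ^ 2) := by gcongr
          _ ≤ ((1 - ‖a‖) / 2) ^ (1/2:ℝ) * (1 - ‖z‖ ^ 2) := by gcongr
          _ ≤ _ := by gcongr; linarith
      refine (Real.rpow_le_rpow hq.le h7 hs0.le).trans_eq ?_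
      rw [Real.mul_rpow (by positivity) h2'.le, ← Real.rpow_mul h1.le]
      congr 2; ring
    have hlg := hlog (1 - ‖a‖) h1 (by linarith [norm_nonneg a])
    rw [← hldef] at hlg
    have : 0 ≤ 16 * (cc p a * Real.log (2 / d)) ^ 2 * (1 - ‖phi a z‖ ^ 2) ^ s := by positivity
    refine le_trans ?_ (le_add_of_nonneg_left this)
    calc _ ≤ (C * (1 - ‖a‖) ^ (-(s / 2))) * ((1 - ‖a‖) ^ (s / 2) * (1 - ‖z‖ ^ 2) ^ s) := by gcongr
      _ = _ := by
        rw [Real.rpow_neg h1.le]; field_simp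

lemma IQ_zero (s : ℝ) (g : ℂ → ℂ) :
    IQ s g 0 = ∫⁻ z in ball (0:ℂ) 1, ENNReal.ofReal (‖deriv g z‖ ^ 2 * (1 - ‖z‖ ^ 2) ^ s) := by
  simp [IQ, phi]

lemma IQ_Tg (s : ℝ) (g f : ℂ → ℂ) (hg : HolOn g) (hf : HolOn f) (a : ℂ) (ha : ‖a‖ < 1) :
    IQ s (Tg g f) a = ∫⁻ z in ball (0:ℂ) 1, ENNReal.ofReal (‖f z‖ ^ 2) *
        ENNReal.ofReal (‖deriv g z‖ ^ 2 * (1 - ‖phi a z‖ ^ 2) ^ s) := by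
  apply setLIntegral_congr_fun measurableSet_ball
  intro z hz
  simp only
  rw [(Tg_prop g f hg hf).2 z hz, ← ENNReal.ofReal_mul (by positivity), norm_mul]
  congr 1; ring

lemma necess (p s : ℝ) (hp : 2 < p) (hs0 : 0 < s) (g : ℂ → ℂ) (hg : HolOn g)
    (hmap : MapsInto (Tg g) (Besov p) (Qs s)) :
    ∃ K : ENNReal, K ≠ ⊤ ∧ ∀ a : ℂ, ‖a‖ < 1 →
      ENNReal.ofReal (Real.log (2 / (1 - ‖a‖)) ^ (2 - 2 / p)) * IQ s g a ≤ K := by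
  have hp0 : 0 < p := by linarith
  obtain ⟨C, hC, hpt⟩ := pointwise_test p s hp hs0
  have hmg := measurable_deriv g
  -- the constant function
  have h0 : IQ s g 0 ≠ ⊤ := by
    have hone : (fun _ : ℂ => (1:ℂ)) ∈ Besov p := by
      rw [mem_Besov]
      refine ⟨differentiableOn_const _, ?_⟩
      simp [NB, Real.zero_rpow hp0.ne']
    obtain ⟨-, K, hK, hK'⟩ := (mem_Qs s _).1 (hmap _ hone)
    have := hK' 0 (by simp)
    rw [IQ_Tg s g _ hg (differentiableOn_const _) 0 (by simp)] at this
    simp only [norm_one, one_pow, ENNReal.ofReal_one, one_mul] at this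
    exact ne_top_of_le_ne_top hK this
  by_contra hcon
  push Not at hcon
  have hch : ∀ k : ℕ, ∃ a : ℂ, ‖a‖ < 1 ∧ (8:ENNReal) ^ k <
      ENNReal.ofReal (Real.log (2 / (1 - ‖a‖)) ^ (2 - 2 / p)) * IQ s g a :=
    fun k => hcon _ (ENNReal.pow_ne_top (by norm_num))
  choose a ha hbig using hch
  obtain ⟨f, hf, hNB, hlow⟩ := test_sum p hp a ha
  obtain ⟨-, K, hK, hK'⟩ := (mem_Qs s _).1 (hmap f ((mem_Besov p f).2 ⟨hf, hNB⟩))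
  have key : ∀ k : ℕ, (8:ENNReal) ^ k < 4 ^ k * (64 * K + ENNReal.ofReal C * IQ s g 0) := by
    intro k
    refine (hbig k).trans_le ?_
    have hphi : Measurable (phi (a k)) := by unfold phi; fun_prop
    have hk := hK' (a k) (ha k)
    rw [IQ_Tg s g f hg hf (a k) (ha k)] at hk
    have hl := ell_half (norm_nonneg (a k)) (ha k)
    calc _ ≤ ∫⁻ z in ball (0:ℂ) 1, (ENNReal.ofReal (64 * 4 ^ k) * (ENNReal.ofReal (‖f z‖ ^ 2) *
            ENNReal.ofReal (‖deriv g z‖ ^ 2 * (1 - ‖phi (a k) z‖ ^ 2) ^ s)) +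
          ENNReal.ofReal C * ENNReal.ofReal (‖deriv g z‖ ^ 2 * (1 - ‖z‖ ^ 2) ^ s)) := by
          rw [IQ, ← lintegral_const_mul' _ _ ENNReal.ofReal_ne_top]
          apply setLIntegral_mono' measurableSet_ball
          intro z hz
          rw [mem_ball_zero_iff] at hz
          obtain ⟨h1', h2', h3', h4', h5'⟩ := one_sub_sq_bounds (norm_nonneg z) hz
          have hq : 0 < 1 - ‖phi (a k) z‖ ^ 2 := by
            have := phi_lt (ha k) hz; nlinarith [norm_nonneg (phi (a k) z)]
          have hL := (LL_re (ha k) hz).2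
          have hcc := cc_pos p (ha k)
          rw [← ENNReal.ofReal_mul (by positivity), ← ENNReal.ofReal_mul (by positivity),
            ← ENNReal.ofReal_mul (by positivity), ← ENNReal.ofReal_mul (by positivity),
            ← ENNReal.ofReal_add (by positivity) (by positivity)]
          apply ENNReal.ofReal_le_ofReal
          set X := cc p (a k) * Real.log (2 / ‖1 - (starRingEnd ℂ) (a k) * z‖) with hX
          have hX2 : X ^ 2 ≤ 4 * 4 ^ k * ‖f z‖ ^ 2 := by
            have h6 := pow_le_pow_left₀ (by positivity) (hlow k z hz) 2
            rw [← hX, mul_pow, ← pow_mul, mul_comm (k + 1), pow_mul, pow_succ] at h6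
            calc X ^ 2 = 4 * 4 ^ k * (((1/2:ℝ) ^ 2) ^ k * (1/2) ^ 2 * X ^ 2) := by
                  have : (4:ℝ) ^ k * ((1/2:ℝ) ^ 2) ^ k = 1 := by rw [← mul_pow]; norm_num
                  linear_combination (-X ^ 2) * this
              _ ≤ _ := by gcongr
          calc _ = ‖deriv g z‖ ^ 2 * (Real.log (2 / (1 - ‖a k‖)) ^ (2 - 2 / p) *
                (1 - ‖phi (a k) z‖ ^ 2) ^ s) := by ring
            _ ≤ ‖deriv g z‖ ^ 2 * (16 * X ^ 2 * (1 - ‖phi (a k) z‖ ^ 2) ^ s +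
                C * (1 - ‖z‖ ^ 2) ^ s) := by
                gcongr; exact hpt (a k) z (ha k) hz
            _ ≤ ‖deriv g z‖ ^ 2 * (16 * (4 * 4 ^ k * ‖f z‖ ^ 2) * (1 - ‖phi (a k) z‖ ^ 2) ^ s +
                C * (1 - ‖z‖ ^ 2) ^ s) := by gcongr
            _ = _ := by ring
      _ = ENNReal.ofReal (64 * 4 ^ k) * (∫⁻ z in ball (0:ℂ) 1, (ENNReal.ofReal (‖f z‖ ^ 2) *
            ENNReal.ofReal (‖deriv g z‖ ^ 2 * (1 - ‖phi (a k) z‖ ^ 2) ^ s))) +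
            ENNReal.ofReal C * IQ s g 0 := by
          rw [lintegral_add_right _ (by fun_prop), lintegral_const_mul' _ _ ENNReal.ofReal_ne_top,
            lintegral_const_mul' _ _ ENNReal.ofReal_ne_top, IQ_zero]
      _ ≤ ENNReal.ofReal (64 * 4 ^ k) * K + 4 ^ k * (ENNReal.ofReal C * IQ s g 0) := by
          refine add_le_add (mul_le_mul_right hk _) ?_
          calc ENNReal.ofReal C * IQ s g 0 = 1 * (ENNReal.ofReal C * IQ s g 0) := (one_mul _).symm
            _ ≤ _ := mul_le_mul_left (one_le_pow₀ (by norm_num)) _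
      _ = _ := by
          rw [ENNReal.ofReal_mul (by norm_num), ENNReal.ofReal_pow (by norm_num)]
          simp only [ENNReal.ofReal_ofNat]
          ring
  set R := 64 * K + ENNReal.ofReal C * IQ s g 0 with hR
  have hRt : R ≠ ⊤ := ENNReal.add_ne_top.2 ⟨ENNReal.mul_ne_top (by norm_num) hK,
    ENNReal.mul_ne_top ENNReal.ofReal_ne_top h0⟩
  obtain ⟨n, hn⟩ := ENNReal.exists_nat_gt hRt
  have h1 := key n
  have h2 : R ≤ 2 ^ n := by
    refine hn.le.trans ?_
    exact_mod_cast (Nat.lt_two_pow_self (n := n)).le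
  have h3 : (4:ENNReal) ^ n * R ≤ 8 ^ n := by
    calc _ ≤ (4:ENNReal) ^ n * 2 ^ n := by gcongr
      _ = 8 ^ n := by rw [← mul_pow]; norm_num
  exact absurd h1 (not_lt.2 h3)

/-- For `2 < p < ∞`, `0 < s < 1` with `1 - 2/p < s`, `p'` the conjugate
exponent of `p`, and `g` holomorphic on the unit disc: `T_g` maps `Bᵖ` into `Q_s` iff
`g ∈ Q_{s,log,1/p'}`. -/
theorem stmt8 (p p' s : ℝ) (hp : 2 < p) (hpp' : 1 / p + 1 / p' = 1)
    (hs0 : 0 < s) (hs1 : s < 1) (hps : 1 - 2 / p < s) (g : ℂ → ℂ) (hg : HolOn g) :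
    MapsInto (Tg g) (Besov p) (Qs s) ↔ g ∈ QsLog s (1 / p') := by
  have e : 2 * (1 / p') = 2 - 2 / p := by
    have : 1 / p' = 1 - 1 / p := by linarith
    rw [this]; ring
  rw [mem_QsLog, e]
  constructor
  · intro hmap
    exact ⟨hg, necess p s hp hs0 g hg hmap⟩
  · rintro ⟨-, M, hM, hM'⟩ f hf
    obtain ⟨hf1, hf2⟩ := (mem_Besov p f).1 hf
    have hN : NS p f ≠ ⊤ := ne_top_of_le_ne_top
      (ENNReal.mul_ne_top ENNReal.ofReal_ne_top hf2.ne) (NS_le_NB p hp f)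
    obtain ⟨K, hK, hK'⟩ := suff p s hp hs0 hs1 hps g M hM hM' f hf1 hN
    rw [mem_Qs]
    refine ⟨(Tg_prop g f hg hf1).1, K, hK, ?_⟩
    intro a ha
    rw [IQ_Tg s g f hg hf1 a ha]
    exact hK' a ha
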